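/- arXiv:2311.03594 — 7 statements merged into one kernel-verified Lean document; each statement's English description precedes it below -/
import Mathlib

section
/- Let g : [a,b] → [a,b] be a continuous map with a < b for which there exists m ∈ (a,b) such that g is strictly increasing on [a,m] and strictly decreasing on [m,b], and such that g(a) ≥ a, g(b) < b, and g(x) > x for all x ∈ (a,m]. Let Π = {x ∈ [m,b] : g(x) ∈ [m,b] and g(g(x)) = x}. Then g has a periodic point of odd minimal period at least 3 if and only if g(g(m)) < m and g(g(g(m))) < inf Π. -/
/-!
A periodic point in an invariant set on which `g` is monotone or antitone is a fixed point of `g²`,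
so a periodic orbit of odd period `≥ 3` meets no such set. Hence it has a point right of `m`, and
`g²(m) < m`, for otherwise `[m, g(m)]` would be such a set. The interval `[p, g(p)]` with
`p = inf Π` is also such a set, so the orbit avoids it; if `g³(m) ≥ p`, then `g` interchanges the
orbit points in `[g²(m), p)` with those in `(g(p), g(m)]`, and the period is even.

Conversely, `g²(m) < m` forces `g² < id` on `[m, p)`, so `g²`-orbits starting just left of `p`
descend below `m`. By the intermediate value theorem some `g²ᵏ` takes the values `g²(m)` and `m` at
points `w ≤ w'` of `(g³(m), p)`. As `g` maps `[g²(m), m]` over `[g³(m), p]`, these have preimages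
`y ≤ y'` there, and between `y` and `y'` lies a fixed point of `g²ᵏ⁺¹`.
-/

open Set Function Filter Topology

section Period

variable {α : Type*} {g : α → α} {s t : Set α} {x : α} {n : ℕ}

/-- The points of odd minimal period at least three. Since `minimalPeriod` is `0` at a
non-periodic point, all of these are periodic. -/
def oddPeriodicPts (g : α → α) : Set α :=
  {x | Odd (minimalPeriod g x) ∧ 3 ≤ minimalPeriod g x}

lemma mem_periodicPts_of_mem_oddPeriodicPts (hx : x ∈ oddPeriodicPts g) : x ∈ periodicPts g :=
  minimalPeriod_pos_iff_mem_periodicPts.1 hx.1.pos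

lemma mapsTo_oddPeriodicPts (g : α → α) : MapsTo g (oddPeriodicPts g) (oddPeriodicPts g) := by
  intro x hx
  have hper := minimalPeriod_apply (mem_periodicPts_of_mem_oddPeriodicPts hx)
  exact ⟨hper ▸ hx.1, hper ▸ hx.2⟩

lemma not_isPeriodicPt_two_of_mem_oddPeriodicPts (hx : x ∈ oddPeriodicPts g) :
    ¬IsPeriodicPt g 2 x := fun h ↦
  absurd (h.minimalPeriod_le two_pos) (by have := hx.2; omega)

lemma mem_oddPeriodicPts_of_isPeriodicPt (hn : Odd n) (hx : IsPeriodicPt g n x)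
    (hfix : ¬IsFixedPt g x) : x ∈ oddPeriodicPts g := by
  have hodd : Odd (minimalPeriod g x) := hn.of_dvd_nat hx.minimalPeriod_dvd
  have hne : minimalPeriod g x ≠ 1 := mt minimalPeriod_eq_one_iff_isFixedPt.1 hfix
  obtain ⟨k, hk⟩ := hodd
  exact ⟨⟨k, hk⟩, by omega⟩

lemma mem_image_of_mem_periodicPts (hs : MapsTo g s s) (hx : x ∈ s) (hper : x ∈ periodicPts g) :
    x ∈ g '' s := by
  obtain ⟨n, hn, hx_per⟩ := hper
  obtain ⟨k, rfl⟩ := Nat.exists_eq_succ_of_ne_zero hn.ne'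
  exact ⟨g^[k] x, hs.iterate k hx, (iterate_succ_apply' g k x).symm.trans hx_per⟩

lemma even_of_isPeriodicPt_of_mapsTo_of_disjoint (hst : MapsTo g s t) (hts : MapsTo g t s)
    (hdisj : Disjoint s t) (hx : x ∈ s) (hper : IsPeriodicPt g n x) : Even n := by
  by_contra hn
  obtain ⟨k, rfl⟩ := Nat.not_even_iff_odd.1 hn
  have hmem : g^[2 * k + 1] x ∈ t := by
    rw [iterate_succ_apply', iterate_mul]
    exact hst ((hts.comp hst).iterate k hx)
  exact disjoint_left.1 hdisj hx (hper.eq ▸ hmem)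

end Period

section Preorder

variable {α : Type*} [Preorder α] {g : α → α} {s : Set α} {b m p x : α}

lemma le_apply_of_isMaxOn_of_mem_periodicPts (hs : MapsTo g s s) (hmax : IsMaxOn g s m)
    (hx : x ∈ s) (hper : x ∈ periodicPts g) : x ≤ g m := by
  obtain ⟨y, hy, rfl⟩ := mem_image_of_mem_periodicPts hs hx hper
  exact hmax hy

/-- The set `Π`: the fixed points of `g²` whose `g`-orbit stays in `[m, b]`. -/
def rightTwoPeriodicPts (g : α → α) (m b : α) : Set α :=
  {x | x ∈ Icc m b ∧ g x ∈ Icc m b ∧ g (g x) = x}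

lemma mapsTo_rightTwoPeriodicPts (g : α → α) (m b : α) :
    MapsTo g (rightTwoPeriodicPts g m b) (rightTwoPeriodicPts g m b) :=
  fun _ ⟨hx, hgx, hggx⟩ ↦ ⟨hgx, hggx.symm ▸ hx, congrArg g hggx⟩

lemma le_apply_of_isLeast_rightTwoPeriodicPts (hp : IsLeast (rightTwoPeriodicPts g m b) p) :
    p ≤ g p :=
  hp.2 (mapsTo_rightTwoPeriodicPts g m b hp.1)

end Preorder

section Monotone

variable {α : Type*} [LinearOrder α] {f g : α → α} {s : Set α} {a b m x : α} {n : ℕ}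

lemma isFixedPt_of_isPeriodicPt_of_monotoneOn (hmono : MonotoneOn f s) (hs : MapsTo f s s)
    (hx : x ∈ s) (hn : 0 < n) (hper : IsPeriodicPt f n x) : IsFixedPt f x := by
  have hmono_restrict : Monotone (hs.restrict f s s) := fun y z hyz ↦ hmono y.2 z.2 hyz
  have hper_restrict : (hs.restrict f s s)^[n] ⟨x, hx⟩ = id^[n] ⟨x, hx⟩ := by
    rw [iterate_id]
    exact Subtype.ext ((hs.coe_iterate_restrict ⟨x, hx⟩ n).trans hper)
  exact congrArg Subtype.val <|
    (Commute.id_right.iterate_pos_eq_iff_map_eq hmono_restrict strictMono_id hn).1 hper_restrict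

lemma isPeriodicPt_two_of_isPeriodicPt_of_antitoneOn (hanti : AntitoneOn g s)
    (hs : MapsTo g s s) (hx : x ∈ s) (hn : 0 < n) (hper : IsPeriodicPt g n x) :
    IsPeriodicPt g 2 x :=
  isFixedPt_of_isPeriodicPt_of_monotoneOn (hanti.comp hanti hs) (hs.comp hs) hx hn
    (hper.iterate 2)

lemma notMem_of_mem_oddPeriodicPts_of_monotoneOn (hmono : MonotoneOn g s) (hs : MapsTo g s s)
    (hx : x ∈ oddPeriodicPts g) : x ∉ s := fun hxs ↦
  have ⟨_, hn, hper⟩ := mem_periodicPts_of_mem_oddPeriodicPts hx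
  not_isPeriodicPt_two_of_mem_oddPeriodicPts hx
    ((isFixedPt_of_isPeriodicPt_of_monotoneOn hmono hs hxs hn hper).iterate 2)

lemma notMem_of_mem_oddPeriodicPts_of_antitoneOn (hanti : AntitoneOn g s) (hs : MapsTo g s s)
    (hx : x ∈ oddPeriodicPts g) : x ∉ s := fun hxs ↦
  have ⟨_, hn, hper⟩ := mem_periodicPts_of_mem_oddPeriodicPts hx
  not_isPeriodicPt_two_of_mem_oddPeriodicPts hx
    (isPeriodicPt_two_of_isPeriodicPt_of_antitoneOn hanti hs hxs hn hper)

lemma exists_lt_mem_oddPeriodicPts_of_monotoneOn (hmaps : MapsTo g (Icc a b) (Icc a b))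
    (hmono : MonotoneOn g (Icc a m)) (hx : x ∈ Icc a b) (hodd : x ∈ oddPeriodicPts g) :
    ∃ y ∈ Icc a b, y ∈ oddPeriodicPts g ∧ m < y := by
  by_contra! hle
  have hinv : MapsTo g (Icc a b ∩ oddPeriodicPts g) (Icc a b ∩ oddPeriodicPts g) :=
    hmaps.inter_inter (mapsTo_oddPeriodicPts g)
  have hsub : Icc a b ∩ oddPeriodicPts g ⊆ Icc a m := fun y hy ↦ ⟨hy.1.1, hle y hy.1 hy.2⟩
  exact notMem_of_mem_oddPeriodicPts_of_monotoneOn (hmono.mono hsub) hinv hodd ⟨hx, hodd⟩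

end Monotone

section TwoCycles

variable {α : Type*} [LinearOrder α] {g : α → α} {a b m p x : α}

lemma notMem_Icc_of_mem_oddPeriodicPts (hanti : AntitoneOn g (Icc m b))
    (hp : p ∈ rightTwoPeriodicPts g m b) (hx : x ∈ oddPeriodicPts g) : x ∉ Icc p (g p) := by
  obtain ⟨hpI, hgpI, hggp⟩ := hp
  have hsub : Icc p (g p) ⊆ Icc m b := Icc_subset_Icc hpI.1 hgpI.2
  refine notMem_of_mem_oddPeriodicPts_of_antitoneOn (hanti.mono hsub) (fun y hy ↦ ?_) hx
  exact ⟨hggp.symm.trans_le (hanti (hsub hy) hgpI hy.2), hanti hpI (hsub hy) hy.1⟩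

theorem apply_apply_lt_of_mem_oddPeriodicPts (hmaps : MapsTo g (Icc a b) (Icc a b))
    (hm : m ∈ Icc a b) (hmono : MonotoneOn g (Icc a m)) (hanti : AntitoneOn g (Icc m b))
    (hx : x ∈ Icc a b) (hodd : x ∈ oddPeriodicPts g) : g (g m) < m := by
  obtain ⟨y, hy, hy_odd, hmy⟩ := exists_lt_mem_oddPeriodicPts_of_monotoneOn hmaps hmono hx hodd
  have hmax : IsMaxOn g (Icc a b) m := isMaxOn_Icc_of_mono_anti hmono hanti
  have hy_le : y ≤ g m := le_apply_of_isMaxOn_of_mem_periodicPts hmaps hmax hy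
    (mem_periodicPts_of_mem_oddPeriodicPts hy_odd)
  have hgm : g m ∈ Icc m b := ⟨hmy.le.trans hy_le, (hmaps hm).2⟩
  have hsub : Icc m (g m) ⊆ Icc m b := Icc_subset_Icc_right hgm.2
  by_contra! hle
  have hinv : MapsTo g (Icc m (g m)) (Icc m (g m)) := fun z hz ↦
    ⟨hle.trans (hanti (hsub hz) hgm hz.2), hanti ⟨le_rfl, hm.2⟩ (hsub hz) hz.1⟩
  exact notMem_of_mem_oddPeriodicPts_of_antitoneOn (hanti.mono hsub) hinv hy_odd ⟨hmy.le, hy_le⟩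

lemma mapsTo_oddPeriodicPts_Ico_Ioc (hmaps : MapsTo g (Icc a b) (Icc a b))
    (hm : m ∈ Icc a b) (hmono : MonotoneOn g (Icc a m)) (hanti : AntitoneOn g (Icc m b))
    (hp : p ∈ rightTwoPeriodicPts g m b) (hpg : p ≤ g p) (hggm : g (g m) ≤ m)
    (hple : p ≤ g (g (g m))) :
    MapsTo g (oddPeriodicPts g ∩ Ico (g (g m)) p) (oddPeriodicPts g ∩ Ioc (g p) (g m)) := by
  rintro y ⟨hy_odd, hy⟩
  have hgy_odd := mapsTo_oddPeriodicPts g hy_odd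
  have ha : a ≤ g (g m) := (hmaps (hmaps hm)).1
  have hyI : y ∈ Icc a b := ⟨ha.trans hy.1, hy.2.le.trans hp.1.2⟩
  have hpgy : p ≤ g y := by
    rcases le_total y m with hym | hmy
    · exact hple.trans (hmono ⟨ha, hggm⟩ ⟨hyI.1, hym⟩ hy.1)
    · exact hpg.trans (hanti ⟨hmy, hyI.2⟩ hp.1 hy.2.le)
  have hgpgy : g p < g y :=
    not_le.1 fun h ↦ notMem_Icc_of_mem_oddPeriodicPts hanti hp hgy_odd ⟨hpgy, h⟩
  exact ⟨hgy_odd, hgpgy, isMaxOn_Icc_of_mono_anti hmono hanti hyI⟩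

lemma mapsTo_oddPeriodicPts_Ioc_Ico (hgm : g m ≤ b) (hanti : AntitoneOn g (Icc m b))
    (hp : p ∈ rightTwoPeriodicPts g m b) (hpg : p ≤ g p) :
    MapsTo g (oddPeriodicPts g ∩ Ioc (g p) (g m)) (oddPeriodicPts g ∩ Ico (g (g m)) p) := by
  rintro y ⟨hy_odd, hy⟩
  have hgy_odd := mapsTo_oddPeriodicPts g hy_odd
  have hmy : m ≤ y := hp.2.1.1.trans hy.1.le
  have hyI : y ∈ Icc m b := ⟨hmy, hy.2.trans hgm⟩
  have hgy_le : g y ≤ p := (hanti hp.2.1 hyI hy.1.le).trans_eq hp.2.2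
  have hgy_lt : g y < p := not_le.1 fun h ↦
    notMem_Icc_of_mem_oddPeriodicPts hanti hp hgy_odd
      ⟨h, hgy_le.trans hpg⟩
  exact ⟨hgy_odd, hanti hyI ⟨hmy.trans hy.2, hgm⟩ hy.2, hgy_lt⟩

theorem apply_apply_apply_lt_of_mem_oddPeriodicPts (hmaps : MapsTo g (Icc a b) (Icc a b))
    (hm : m ∈ Icc a b) (hmono : MonotoneOn g (Icc a m)) (hanti : AntitoneOn g (Icc m b))
    (hp : p ∈ rightTwoPeriodicPts g m b) (hpg : p ≤ g p) (hx : x ∈ Icc a b)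
    (hodd : x ∈ oddPeriodicPts g) : g (g (g m)) < p := by
  have hggm : g (g m) < m := apply_apply_lt_of_mem_oddPeriodicPts hmaps hm hmono hanti hx hodd
  by_contra! hple
  have hLR := mapsTo_oddPeriodicPts_Ico_Ioc hmaps hm hmono hanti hp hpg hggm.le hple
  have hRL := mapsTo_oddPeriodicPts_Ioc_Ico (hmaps hm).2 hanti hp hpg
  have hdisj : Disjoint (oddPeriodicPts g ∩ Ico (g (g m)) p)
      (oddPeriodicPts g ∩ Ioc (g p) (g m)) :=
    disjoint_left.2 fun _ hL hR ↦ (hL.2.2.trans_le hpg).not_gt hR.2.1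
  obtain ⟨y, hy, hy_odd, hmy⟩ := exists_lt_mem_oddPeriodicPts_of_monotoneOn hmaps hmono hx hodd
  have hy_per : IsPeriodicPt g (minimalPeriod g y) y := isPeriodicPt_minimalPeriod g y
  refine Nat.not_even_iff_odd.2 hy_odd.1 ?_
  rcases lt_or_ge y p with hyp | hpy
  · exact even_of_isPeriodicPt_of_mapsTo_of_disjoint hLR hRL hdisj
      ⟨hy_odd, (hggm.trans hmy).le, hyp⟩ hy_per
  · have hgpy : g p < y :=
      not_le.1 fun h ↦ notMem_Icc_of_mem_oddPeriodicPts hanti hp hy_odd ⟨hpy, h⟩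
    have hy_le : y ≤ g m := le_apply_of_isMaxOn_of_mem_periodicPts hmaps
      (isMaxOn_Icc_of_mono_anti hmono hanti) hy (mem_periodicPts_of_mem_oddPeriodicPts hy_odd)
    exact even_of_isPeriodicPt_of_mapsTo_of_disjoint hRL hLR hdisj.symm
      ⟨hy_odd, hgpy, hy_le⟩ hy_per

end TwoCycles

section Existence

variable {α : Type*} [ConditionallyCompleteLinearOrder α] [TopologicalSpace α] [OrderTopology α]
  {f g : α → α} {s : Set α} {a b m p u : α}

lemma exists_iterate_lt_of_forall_apply_lt (hf : ContinuousOn f (Icc a u))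
    (hlt : ∀ x ∈ Icc a u, f x < x) : ∃ k, f^[k] u < a := by
  by_contra! hge
  have hle : ∀ k, f^[k] u ≤ u := by
    intro k
    induction k with
    | zero => exact le_rfl
    | succ k ih =>
      rw [iterate_succ_apply']
      exact (hlt _ ⟨hge k, ih⟩).le.trans ih
  have hanti : Antitone fun k ↦ f^[k] u := antitone_nat_of_succ_le fun k ↦ by
    rw [iterate_succ_apply']
    exact (hlt _ ⟨hge k, hle k⟩).le
  have hlim : Tendsto (fun k ↦ f^[k] u) atTop (𝓝 (⨅ k, f^[k] u)) :=
    tendsto_atTop_ciInf hanti ⟨a, forall_mem_range.2 hge⟩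
  have hmem : ⨅ k, f^[k] u ∈ Icc a u :=
    isClosed_Icc.mem_of_tendsto hlim (.of_forall fun k ↦ ⟨hge k, hle k⟩)
  have hlim_succ : Tendsto (fun k ↦ f^[k + 1] u) atTop (𝓝 (f (⨅ k, f^[k] u))) := by
    simp only [iterate_succ_apply']
    exact (hf _ hmem).tendsto.comp
      (tendsto_nhdsWithin_iff.2 ⟨hlim, .of_forall fun k ↦ ⟨hge k, hle k⟩⟩)
  exact (hlt _ hmem).ne
    (tendsto_nhds_unique hlim_succ (hlim.comp (tendsto_add_atTop_nat 1)))

variable [DenselyOrdered α]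

lemma exists_iterate_eq_apply_and_iterate_eq (hs : MapsTo f s s) (hf : ContinuousOn f s)
    (hsub : Icc m p ⊆ s) (hlt : ∀ x ∈ Ico m p, f x < x) (hp : IsFixedPt f p)
    (hu : u ∈ Ico m p) :
    ∃ k, ∃ w ∈ Icc u p, ∃ w' ∈ Icc w p, f^[k] w = f m ∧ f^[k] w' = m := by
  obtain ⟨k, hk⟩ := exists_iterate_lt_of_forall_apply_lt
    (hf.mono ((Icc_subset_Icc_right hu.2.le).trans hsub))
    fun x hx ↦ hlt x ⟨hx.1, hx.2.trans_lt hu.2⟩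
  have hmp : m < p := hu.1.trans_lt hu.2
  have hcont (j : ℕ) {v : α} (hv : m ≤ v) : ContinuousOn f^[j] (Icc v p) :=
    (hf.iterate hs j).mono ((Icc_subset_Icc_left hv).trans hsub)
  have hm_le (j : ℕ) : m ≤ f^[j] p := hmp.le.trans_eq (hp.iterate j).eq.symm
  obtain ⟨w, hw, hkw⟩ := intermediate_value_Icc hu.2.le (hcont k hu.1) ⟨hk.le, hm_le k⟩
  have hkw_succ : f^[k + 1] w = f m := by rw [iterate_succ_apply', hkw]
  obtain ⟨w', hw', hkw'⟩ := intermediate_value_Icc hw.2 (hcont (k + 1) (hu.1.trans hw.1))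
    ⟨hkw_succ.trans_le (hlt m ⟨le_rfl, hmp⟩).le, hm_le (k + 1)⟩
  exact ⟨k + 1, w, hw, w', hw', hkw_succ, hkw'⟩

lemma exists_isFixedPt_comp_mem_Ioc {c w w' : α} (hg : ContinuousOn g (Icc c m))
    (hfg : ContinuousOn (f ∘ g) (Icc c m)) (hcm : c ≤ m) (hgc : g c < w) (hww' : w ≤ w')
    (hgm : w' ≤ g m) (hfw : f w ≤ c) (hfw' : m ≤ f w') : ∃ z ∈ Ioc c m, IsFixedPt (f ∘ g) z := by
  obtain ⟨y, hy, rfl⟩ := intermediate_value_Ioc hcm hg ⟨hgc, hww'.trans hgm⟩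
  have hsub : Icc y m ⊆ Icc c m := Icc_subset_Icc_left hy.1.le
  obtain ⟨y', hy', rfl⟩ := intermediate_value_Icc hy.2 (hg.mono hsub) ⟨hww', hgm⟩
  obtain ⟨z, hz, hfix⟩ : ∃ z ∈ Icc y y', f (g z) = z :=
    isPreconnected_Icc.intermediate_value₂ (left_mem_Icc.2 hy'.1) (right_mem_Icc.2 hy'.1)
      (hfg.mono ((Icc_subset_Icc_right hy'.2).trans hsub)) continuousOn_id
      (hfw.trans hy.1.le) (hy'.2.trans hfw')
  exact ⟨z, ⟨hy.1.trans_le hz.1, hz.2.trans hy'.2⟩, hfix⟩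

lemma isLeast_sInf_rightTwoPeriodicPts (hmb : m ≤ b) (hg : ContinuousOn g (Icc m b))
    (hm : m ≤ g m) (hb : g b ≤ b) :
    IsLeast (rightTwoPeriodicPts g m b) (sInf (rightTwoPeriodicPts g m b)) := by
  have hclosed : IsClosed (rightTwoPeriodicPts g m b) := by
    have hdom : IsClosed (Icc m b ∩ g ⁻¹' Icc m b) :=
      hg.preimage_isClosed_of_isClosed isClosed_Icc isClosed_Icc
    have hclosed_eq := hdom.isClosed_eq (hg.comp (hg.mono inter_subset_left) fun _ hx ↦ hx.2)
      continuousOn_id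
    convert hclosed_eq using 1
    ext x
    exact and_assoc.symm
  obtain ⟨z, hz, hgz⟩ := exists_mem_Icc_isFixedPt hg hmb hm hb
  exact hclosed.isLeast_csInf ⟨z, hz, hgz.symm ▸ hz, hgz.iterate 2⟩ ⟨m, fun _ hx ↦ hx.1.1⟩

lemma apply_apply_lt_self_of_isLeast_rightTwoPeriodicPts
    (hmaps : MapsTo g (Icc m b) (Iic b)) (hanti : AntitoneOn g (Icc m b))
    (hgg : ContinuousOn g^[2] (Icc m b)) (hp : IsLeast (rightTwoPeriodicPts g m b) p)
    (hm : g (g m) < m) : ∀ x ∈ Ico m p, g (g x) < x := by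
  intro x hx
  by_contra! hle
  obtain ⟨hpI, hgpI, -⟩ := hp.1
  have hxp : Icc m x ⊆ Icc m b := Icc_subset_Icc_right (hx.2.le.trans hpI.2)
  obtain ⟨t, ht, hgt⟩ : ∃ t ∈ Icc m x, g (g t) = t :=
    isPreconnected_Icc.intermediate_value₂ (left_mem_Icc.2 hx.1) (right_mem_Icc.2 hx.1)
      (hgg.mono hxp) continuousOn_id hm.le hle
  have htp : t < p := ht.2.trans_lt hx.2
  have hmgt : m ≤ g t := hgpI.1.trans (hanti (hxp ht) hpI htp.le)
  exact htp.not_ge (hp.2 ⟨hxp ht, ⟨hmgt, hmaps (hxp ht)⟩, hgt⟩)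

theorem exists_mem_oddPeriodicPts (hg : ContinuousOn g (Icc a b))
    (hmaps : MapsTo g (Icc a b) (Icc a b)) (hm : m ∈ Icc a b) (hanti : AntitoneOn g (Icc m b))
    (hlt : ∀ x ∈ Ioc a m, x < g x) (hp : IsLeast (rightTwoPeriodicPts g m b) p)
    (hggm : g (g m) < m) (hgggm : g (g (g m)) < p) : ∃ x ∈ Icc a b, x ∈ oddPeriodicPts g := by
  obtain ⟨hpI, hgpI, hggp⟩ := hp.1
  have hsub : Icc m b ⊆ Icc a b := Icc_subset_Icc_left hm.1
  have hgg : ContinuousOn g^[2] (Icc a b) := hg.iterate hmaps 2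
  have hpgm : p ≤ g m := hggp.symm.trans_le (hanti ⟨le_rfl, hm.2⟩ hgpI hgpI.1)
  have hmp : m < p := hpI.1.lt_of_ne fun h ↦ hggm.ne (h ▸ hggp)
  have hbelow : ∀ x ∈ Ico m p, g^[2] x < x :=
    apply_apply_lt_self_of_isLeast_rightTwoPeriodicPts (fun x hx ↦ (hmaps (hsub hx)).2) hanti
      (hgg.mono hsub) hp hggm
  obtain ⟨u, hu, hup⟩ := exists_between (max_lt hmp hgggm)
  obtain ⟨hmu, hgggu⟩ := max_lt_iff.1 hu
  obtain ⟨k, w, hw, w', hw', hkw, hkw'⟩ := exists_iterate_eq_apply_and_iterate_eq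
    (hmaps.iterate 2) hgg ((Icc_subset_Icc_right hpI.2).trans hsub) hbelow hggp ⟨hmu.le, hup⟩
  have ha : a ≤ g (g m) := (hmaps (hmaps hm)).1
  have hsub_left : Icc (g (g m)) m ⊆ Icc a b := Icc_subset_Icc ha hm.2
  have hcont : ContinuousOn ((g^[2])^[k] ∘ g) (Icc (g (g m)) m) :=
    (hgg.iterate (hmaps.iterate 2) k).comp (hg.mono hsub_left) (hmaps.mono_left hsub_left)
  obtain ⟨z, hz, hfix⟩ := exists_isFixedPt_comp_mem_Ioc (hg.mono hsub_left) hcont hggm.le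
    (hgggu.trans_le hw.1) hw'.1 (hw'.2.trans hpgm) hkw.le hkw'.ge
  have hper : IsPeriodicPt g (2 * k + 1) z := by
    rwa [← iterate_mul, ← iterate_succ] at hfix
  have hzg : z < g z := hlt z ⟨ha.trans_lt hz.1, hz.2⟩
  exact ⟨z, hsub_left (Ioc_subset_Icc_self hz),
    mem_oddPeriodicPts_of_isPeriodicPt ⟨k, rfl⟩ hper hzg.ne'⟩

theorem odd_period_cycle_iff_general (hg : ContinuousOn g (Icc a b))
    (hmaps : MapsTo g (Icc a b) (Icc a b)) (hm : m ∈ Ioo a b) (hmono : MonotoneOn g (Icc a m))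
    (hanti : AntitoneOn g (Icc m b)) (hlt : ∀ x ∈ Ioc a m, x < g x) :
    (∃ x ∈ Icc a b, x ∈ oddPeriodicPts g) ↔
      g (g m) < m ∧ g (g (g m)) < sInf (rightTwoPeriodicPts g m b) := by
  have hmI : m ∈ Icc a b := Ioo_subset_Icc_self hm
  have hb : b ∈ Icc a b := ⟨hmI.1.trans hmI.2, le_rfl⟩
  have hp : IsLeast (rightTwoPeriodicPts g m b) (sInf (rightTwoPeriodicPts g m b)) :=
    isLeast_sInf_rightTwoPeriodicPts hmI.2 (hg.mono (Icc_subset_Icc_left hmI.1))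
      (hlt m ⟨hm.1, le_rfl⟩).le (hmaps hb).2
  constructor
  · rintro ⟨x, hx, hodd⟩
    exact ⟨apply_apply_lt_of_mem_oddPeriodicPts hmaps hmI hmono hanti hx hodd,
      apply_apply_apply_lt_of_mem_oddPeriodicPts hmaps hmI hmono hanti hp.1
        (le_apply_of_isLeast_rightTwoPeriodicPts hp) hx hodd⟩
  · rintro ⟨hggm, hgggm⟩
    exact exists_mem_oddPeriodicPts hg hmaps hmI hanti hlt hp hggm hgggm

end Existence

/-- Deng–Khan–Mitra: for a unimodal map `g` of `[a,b]` as below, `g` has a periodic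
point of odd minimal period at least 3 iff `g²(m) < m` and `g³(m) < inf Π`. -/
theorem odd_period_cycle_iff
    (a b m : ℝ) (g : ℝ → ℝ)
    (hab : a < b)
    (hcont : ContinuousOn g (Set.Icc a b))
    (hmaps : Set.MapsTo g (Set.Icc a b) (Set.Icc a b))
    (hm : m ∈ Set.Ioo a b)
    (hmono : StrictMonoOn g (Set.Icc a m))
    (hanti : StrictAntiOn g (Set.Icc m b))
    (hga : g a ≥ a)
    (hgb : g b < b)
    (habove : ∀ x ∈ Set.Ioc a m, g x > x) :
    (∃ x ∈ Set.Icc a b,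
        Odd (Function.minimalPeriod g x) ∧ 3 ≤ Function.minimalPeriod g x) ↔
      g (g m) < m ∧
        g (g (g m)) <
          sInf {x | x ∈ Set.Icc m b ∧ g x ∈ Set.Icc m b ∧ g (g x) = x} :=
  odd_period_cycle_iff_general hcont hmaps hm hmono.monotoneOn hanti.antitoneOn habove
end

section
/- Let g : [a,b] → [a,b] be a continuous map with a < b for which there exists m ∈ (a,b) such that g is strictly increasing on [a,m] and strictly decreasing on [m,b], and such that g(a) ≥ a, g(b) < b, and g(x) > x for all x ∈ (a,m]. Let Π = {x ∈ [m,b] : g(x) ∈ [m,b] and g(g(x)) = x}. Then the second iterate g² is turbulent if and only if g(g(m)) < m and g(g(g(m))) ≤ sup Π. -/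
/-- A continuous self-map `h` of the interval `[a,b]` is turbulent if there are
points `x₁, x₂, x₃` in `[a,b]` with `h x₂ = h x₁ = x₁`, `h x₃ = x₂`, and either
`x₁ < x₃ < x₂` or `x₂ < x₃ < x₁`. -/
def Turbulent (a b : ℝ) (h : ℝ → ℝ) : Prop :=
  ∃ x₁ ∈ Set.Icc a b, ∃ x₂ ∈ Set.Icc a b, ∃ x₃ ∈ Set.Icc a b,
    h x₂ = x₁ ∧ h x₁ = x₁ ∧ h x₃ = x₂ ∧
      ((x₁ < x₃ ∧ x₃ < x₂) ∨ (x₂ < x₃ ∧ x₃ < x₁))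

/-!
Write `f = g²`, `c = g m`, `d = g c` and `p = max Π`, so that `g` exchanges `p` and `g p ≤ p`.

The condition `d < m`, `g d ≤ p` amounts to `d < g p`, `g d ≤ p`, because `m ≤ d < g p` would give
`p = g (g p) < g d`. If it holds, then `g u = m` for some `u ∈ [p, c)`. Since `f p = p`, `f u = c`
and `f c ≤ p`, the intermediate value theorem gives a turbulent triple based at `p`.

Conversely, on `(a, d)` the graph of `f` lies above the diagonal, so a turbulent triple lives in the
core `[d, c]`. It splits into a lower piece `[d, g p)`, a middle piece `[g p, p]` and an upper piece
`(p, c]`. The map `g` preserves the middle piece and sends the upper piece into the lower one.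
If the lower piece is empty or `p < g d`, it also sends the lower piece into the upper one. Each
piece is then `f`-invariant, so a turbulent triple lies in a single piece. On the middle piece `f`
is injective, and `g` carries a triple in the upper piece to one in the lower piece. There `f`
decreases up to `m` and increases afterwards, while its fixed points lie left of `m` by
maximality of `p`, and this rules out a triple.
-/

open Set

section TwoCycles

variable {X : Type*} {g : X → X} {s : Set X} {x p : X}

/-- The points of `s` whose orbit under `g` stays in `s` and has period at most two. The set `Π` of
the theorem is `twoCyclePts g (Icc m b)`. -/
def twoCyclePts (g : X → X) (s : Set X) : Set X :=
  {x | x ∈ s ∧ g x ∈ s ∧ g (g x) = x}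

theorem map_mem_twoCyclePts (hx : x ∈ twoCyclePts g s) : g x ∈ twoCyclePts g s :=
  ⟨hx.2.1, hx.2.2.symm ▸ hx.1, congrArg g hx.2.2⟩

theorem mem_twoCyclePts_of_isFixedPt (hx : x ∈ s) (hfix : Function.IsFixedPt g x) :
    x ∈ twoCyclePts g s :=
  ⟨hx, hfix.eq.symm ▸ hx, (congrArg g hfix).trans hfix⟩

theorem isClosed_twoCyclePts [TopologicalSpace X] [T2Space X] (hs : IsClosed s)
    (hg : ContinuousOn g s) : IsClosed (twoCyclePts g s) := by
  have hgg : ContinuousOn (g ∘ g) (s ∩ g ⁻¹' s) :=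
    hg.comp (hg.mono inter_subset_left) fun _ hx ↦ hx.2
  have hclosed : IsClosed {x ∈ s ∩ g ⁻¹' s | (g ∘ g) x = x} :=
    (hg.preimage_isClosed_of_isClosed hs hs).isClosed_eq hgg continuousOn_id
  simpa only [mem_inter_iff, mem_preimage, and_assoc] using! hclosed

theorem mapsTo_Icc_of_mem_twoCyclePts [Preorder X] (hs : s.OrdConnected) (hg : AntitoneOn g s)
    (hp : p ∈ twoCyclePts g s) : MapsTo g (Icc (g p) p) (Icc (g p) p) := by
  simpa only [hp.2.2] using (hg.mono (hs.out hp.2.1 hp.1)).mapsTo_Icc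

end TwoCycles

section LinearOrder

variable {α : Type*} [LinearOrder α] {f g : α → α} {s t : Set α} {a b c d m p x x₁ x₂ x₃ : α}

/-- The points `x₁, x₂, x₃` witness that `f` is turbulent: the condition under the existential
quantifiers of `Turbulent`, for a map of an arbitrary linear order. -/
structure IsTurbulentTriple (f : α → α) (x₁ x₂ x₃ : α) : Prop where
  map_fst : f x₁ = x₁
  map_snd : f x₂ = x₁
  map_thd : f x₃ = x₂
  between : (x₁ < x₃ ∧ x₃ < x₂) ∨ (x₂ < x₃ ∧ x₃ < x₁)

namespace IsTurbulentTriple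

theorem fst_mem (h : IsTurbulentTriple f x₁ x₂ x₃) (hf : MapsTo f s s) (h₂ : x₂ ∈ s) : x₁ ∈ s :=
  h.map_snd ▸ hf h₂

theorem thd_mem (h : IsTurbulentTriple f x₁ x₂ x₃) (hs : s.OrdConnected)
    (h₁ : x₁ ∈ s) (h₂ : x₂ ∈ s) : x₃ ∈ s := by
  rcases h.between with ⟨h₁₃, h₃₂⟩ | ⟨h₂₃, h₃₁⟩
  · exact hs.out h₁ h₂ ⟨h₁₃.le, h₃₂.le⟩
  · exact hs.out h₂ h₁ ⟨h₂₃.le, h₃₁.le⟩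

theorem not_injOn (h : IsTurbulentTriple f x₁ x₂ x₃) (h₁ : x₁ ∈ s) (h₂ : x₂ ∈ s) :
    ¬InjOn f s := by
  intro hf
  have h₁₂ : x₁ = x₂ := hf h₁ h₂ (h.map_fst.trans h.map_snd.symm)
  rcases h.between with ⟨h₁₃, h₃₂⟩ | ⟨h₂₃, h₃₁⟩ <;> order

theorem image_of_strictAntiOn (h : IsTurbulentTriple f x₁ x₂ x₃) (hgf : Function.Commute g f)
    (hg : StrictAntiOn g s) (h₁ : x₁ ∈ s) (h₂ : x₂ ∈ s) (h₃ : x₃ ∈ s) :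
    IsTurbulentTriple f (g x₁) (g x₂) (g x₃) where
  map_fst := by rw [← hgf x₁, h.map_fst]
  map_snd := by rw [← hgf x₂, h.map_snd]
  map_thd := by rw [← hgf x₃, h.map_thd]
  between := h.between.symm.imp
    (fun ⟨h₂₃, h₃₁⟩ ↦ ⟨hg h₃ h₁ h₃₁, hg h₂ h₃ h₂₃⟩)
    (fun ⟨h₁₃, h₃₂⟩ ↦ ⟨hg h₃ h₂ h₃₂, hg h₁ h₃ h₁₃⟩)

theorem notMem_Icc_of_mem_twoCyclePts (h : IsTurbulentTriple (g ∘ g) x₁ x₂ x₃)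
    (hs : s.OrdConnected) (hg : StrictAntiOn g s) (hp : p ∈ twoCyclePts g s) :
    x₂ ∉ Icc (g p) p := by
  intro h₂
  have hmaps := mapsTo_Icc_of_mem_twoCyclePts hs hg.antitoneOn hp
  have hanti : StrictAntiOn g (Icc (g p) p) := hg.mono (hs.out hp.2.1 hp.1)
  exact h.not_injOn (h.fst_mem (hmaps.comp hmaps) h₂) h₂ (hanti.comp hanti hmaps).injOn

theorem mem_Icc_of_lt_map (h : IsTurbulentTriple f x₁ x₂ x₃) (hf : MapsTo f (Icc d c) (Icc d c))
    (hlt : ∀ x ∈ Ioo a d, x < f x) (h₁ : x₁ ∈ Icc a c) (h₂ : x₂ ∈ Icc a c) :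
    x₁ ∈ Icc d c ∧ x₂ ∈ Icc d c := by
  suffices hx₂ : x₂ ∈ Icc d c from ⟨h.fst_mem hf hx₂, hx₂⟩
  rcases h.between with ⟨h₁₃, h₃₂⟩ | ⟨h₂₃, h₃₁⟩
  · refine ⟨?_, h₂.2⟩
    by_contra! hx₂
    have : x₂ < x₁ := h.map_snd ▸ hlt x₂ ⟨h₁.1.trans_lt (h₁₃.trans h₃₂), hx₂⟩
    order
  · have hx₃ : d ≤ x₃ := by
      by_contra! hx₃
      have : x₃ < x₂ := h.map_thd ▸ hlt x₃ ⟨h₂.1.trans_lt h₂₃, hx₃⟩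
      order
    exact h.map_thd ▸ hf ⟨hx₃, h₃₁.le.trans h₁.2⟩

end IsTurbulentTriple

/-- The map `f` has a turbulent triple in `s`. On a real interval `s = [a, b]` this is `Turbulent`;
no invariance of `s` is built in. -/
def TurbulentOn (f : α → α) (s : Set α) : Prop :=
  ∃ x₁ ∈ s, ∃ x₂ ∈ s, ∃ x₃ ∈ s, IsTurbulentTriple f x₁ x₂ x₃

theorem TurbulentOn.mono (h : TurbulentOn f s) (hst : s ⊆ t) : TurbulentOn f t :=
  let ⟨x₁, h₁, x₂, h₂, x₃, h₃, htriple⟩ := h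
  ⟨x₁, hst h₁, x₂, hst h₂, x₃, hst h₃, htriple⟩

/-- The order-theoretic hypotheses on `g`: it maps `[a, b]` into itself, increases strictly up to
an interior peak `m` and decreases strictly afterwards, and its graph lies above the diagonal on
`(a, m]`. Continuity is kept separate. -/
structure UnimodalAboveDiagonal (a m b : α) (g : α → α) : Prop where
  mapsTo : MapsTo g (Icc a b) (Icc a b)
  peak_mem : m ∈ Ioo a b
  strictMonoOn : StrictMonoOn g (Icc a m)
  strictAntiOn : StrictAntiOn g (Icc m b)
  lt_map : ∀ x ∈ Ioc a m, x < g x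

namespace UnimodalAboveDiagonal

theorem lt_map_peak (hg : UnimodalAboveDiagonal a m b g) : m < g m :=
  hg.lt_map m ⟨hg.peak_mem.1, le_rfl⟩

theorem map_le_map_peak (hg : UnimodalAboveDiagonal a m b g) (hx : x ∈ Icc a b) : g x ≤ g m :=
  isMaxOn_Icc_of_mono_anti hg.strictMonoOn.monotoneOn hg.strictAntiOn.antitoneOn hx

theorem map_map_le_map_peak (hg : UnimodalAboveDiagonal a m b g) (hx : x ∈ Icc a b) :
    g (g x) ≤ g m :=
  hg.map_le_map_peak (hg.mapsTo hx)

theorem map_map_peak_le_map_peak (hg : UnimodalAboveDiagonal a m b g) : g (g m) ≤ g m :=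
  hg.map_map_le_map_peak (Ioo_subset_Icc_self hg.peak_mem)

theorem map_peak_mem (hg : UnimodalAboveDiagonal a m b g) : g m ∈ Icc m b :=
  ⟨hg.lt_map_peak.le, (hg.mapsTo (Ioo_subset_Icc_self hg.peak_mem)).2⟩

theorem map_map_peak_mem (hg : UnimodalAboveDiagonal a m b g) : g (g m) ∈ Icc a b :=
  hg.mapsTo (Icc_subset_Icc_left hg.peak_mem.1.le hg.map_peak_mem)

theorem core_subset (hg : UnimodalAboveDiagonal a m b g) : Icc (g (g m)) (g m) ⊆ Icc a b :=
  Icc_subset_Icc hg.map_map_peak_mem.1 hg.map_peak_mem.2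

theorem le_map (hg : UnimodalAboveDiagonal a m b g) (hx : x ∈ Icc a m) : x ≤ g x := by
  rcases hx.1.eq_or_lt with rfl | hax
  · exact (hg.mapsTo ⟨le_rfl, hx.2.trans hg.peak_mem.2.le⟩).1
  · exact (hg.lt_map x ⟨hax, hx.2⟩).le

theorem map_map_peak_le_map (hg : UnimodalAboveDiagonal a m b g) (hx : x ∈ Icc m (g m)) :
    g (g m) ≤ g x :=
  hg.strictAntiOn.antitoneOn ⟨hx.1, hx.2.trans hg.map_peak_mem.2⟩ hg.map_peak_mem hx.2

theorem mapsTo_core (hg : UnimodalAboveDiagonal a m b g) :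
    MapsTo g (Icc (g (g m)) (g m)) (Icc (g (g m)) (g m)) := by
  intro x hx
  refine ⟨?_, hg.map_le_map_peak (hg.core_subset hx)⟩
  rcases le_total x m with hxm | hmx
  · exact hx.1.trans (hg.le_map ⟨(hg.core_subset hx).1, hxm⟩)
  · exact hg.map_map_peak_le_map ⟨hmx, hx.2⟩

theorem lt_map_of_mem_Ioo (hg : UnimodalAboveDiagonal a m b g) (hx : x ∈ Ioo a (g (g m))) :
    x < g x := by
  rcases le_total x m with hxm | hmx
  · exact hg.lt_map x ⟨hx.1, hxm⟩
  · exact hx.2.trans_le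
      (hg.map_map_peak_le_map ⟨hmx, hx.2.le.trans hg.map_map_peak_le_map_peak⟩)

theorem lt_map_map_of_mem_Ioo (hg : UnimodalAboveDiagonal a m b g) (hx : x ∈ Ioo a (g (g m))) :
    x < g (g x) := by
  have hxg : x < g x := hg.lt_map_of_mem_Ioo hx
  rcases lt_or_ge (g x) (g (g m)) with hgx | hgx
  · exact hxg.trans (hg.lt_map_of_mem_Ioo ⟨hx.1.trans hxg, hgx⟩)
  · have hx_mem : x ∈ Icc a b := ⟨hx.1.le, hx.2.le.trans hg.map_map_peak_mem.2⟩
    exact hx.2.trans_le (hg.mapsTo_core ⟨hgx, hg.map_le_map_peak hx_mem⟩).1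

theorem turbulentTriple_mem_core (hg : UnimodalAboveDiagonal a m b g)
    (h : IsTurbulentTriple (g ∘ g) x₁ x₂ x₃) (h₁ : x₁ ∈ Icc a b) (h₂ : x₂ ∈ Icc a b) :
    x₁ ∈ Icc (g (g m)) (g m) ∧ x₂ ∈ Icc (g (g m)) (g m) := by
  have h₃ : x₃ ∈ Icc a b := h.thd_mem ordConnected_Icc h₁ h₂
  refine h.mem_Icc_of_lt_map (hg.mapsTo_core.comp hg.mapsTo_core)
    (fun _ ↦ hg.lt_map_map_of_mem_Ioo) ⟨h₁.1, ?_⟩ ⟨h₂.1, ?_⟩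
  · exact h.map_fst ▸ hg.map_map_le_map_peak h₁
  · exact h.map_thd ▸ hg.map_map_le_map_peak h₃

section TwoCycle

variable (hg : UnimodalAboveDiagonal a m b g) (hp : p ∈ twoCyclePts g (Icc m b))

include hg hp

theorem le_map_peak_of_mem_twoCyclePts : p ≤ g m := by
  have hgp : g p ∈ Icc a b := Icc_subset_Icc_left hg.peak_mem.1.le hp.2.1
  simpa only [hp.2.2] using hg.map_le_map_peak hgp

theorem strictAntiOn_upper : StrictAntiOn g (Ioc p (g m)) :=
  hg.strictAntiOn.mono
    (Ioc_subset_Icc_self.trans (Icc_subset_Icc hp.1.1 hg.map_peak_mem.2))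

theorem mapsTo_upper_lower : MapsTo g (Ioc p (g m)) (Ico (g (g m)) (g p)) := by
  intro x hx
  have hmx : m ≤ x := hp.1.1.trans hx.1.le
  exact ⟨hg.map_map_peak_le_map ⟨hmx, hx.2⟩,
    hg.strictAntiOn hp.1 ⟨hmx, hx.2.trans hg.map_peak_mem.2⟩ hx.1⟩

theorem mapsTo_lower_upper (hsep : g (g m) < g p → p < g (g (g m))) :
    MapsTo g (Ico (g (g m)) (g p)) (Ioc p (g m)) := by
  intro x hx
  have hx_mem : x ∈ Icc a b :=
    ⟨hg.map_map_peak_mem.1.trans hx.1, hx.2.le.trans hp.2.1.2⟩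
  refine ⟨?_, hg.map_le_map_peak hx_mem⟩
  rcases le_total x m with hxm | hmx
  · exact (hsep (hx.1.trans_lt hx.2)).trans_le
      (hg.strictMonoOn.monotoneOn ⟨hg.map_map_peak_mem.1, hx.1.trans hxm⟩ ⟨hx_mem.1, hxm⟩ hx.1)
  · simpa only [hp.2.2] using hg.strictAntiOn ⟨hmx, hx_mem.2⟩ hp.2.1 hx.2

theorem map_map_peak_lt_peak (hlt : g (g m) < g p) (hle : g (g (g m)) ≤ p) : g (g m) < m := by
  by_contra! hm
  have : g (g p) < g (g (g m)) :=
    hg.strictAntiOn ⟨hm, hg.map_map_peak_mem.2⟩ hp.2.1 hlt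
  have := hp.2.2
  order

end TwoCycle

section MaximalTwoCycle

variable (hg : UnimodalAboveDiagonal a m b g) (hp : IsGreatest (twoCyclePts g (Icc m b)) p)

include hg hp

theorem lt_peak_of_mem_lower_of_map_map_eq (hsep : g (g m) < g p → p < g (g (g m)))
    (hx : x ∈ Ico (g (g m)) (g p)) (hfix : g (g x) = x) : x < m := by
  by_contra! hmx
  have hgx : g x ∈ Ioc p (g m) := hg.mapsTo_lower_upper hp.1 hsep hx
  have hcycle : x ∈ twoCyclePts g (Icc m b) :=
    ⟨⟨hmx, hx.2.le.trans hp.1.2.1.2⟩,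
      ⟨hp.1.1.1.trans hgx.1.le, hgx.2.trans hg.map_peak_mem.2⟩, hfix⟩
  exact hgx.1.not_ge (hp.2 (map_mem_twoCyclePts hcycle))

theorem not_turbulentTriple_lower (hsep : g (g m) < g p → p < g (g (g m)))
    (h : IsTurbulentTriple (g ∘ g) x₁ x₂ x₃) : x₂ ∉ Ico (g (g m)) (g p) := by
  intro h₂
  have hmaps := hg.mapsTo_lower_upper hp.1 hsep
  have h₁ := h.fst_mem ((hg.mapsTo_upper_lower hp.1).comp hmaps) h₂
  have h₃ := h.thd_mem ordConnected_Ico h₁ h₂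
  have hx₁m : x₁ < m := hg.lt_peak_of_mem_lower_of_map_map_eq hp hsep h₁ h.map_fst
  have mem_left {x} (hx : x ∈ Ico (g (g m)) (g p)) (hxm : x ≤ m) : x ∈ Icc a m :=
    ⟨hg.map_map_peak_mem.1.trans hx.1, hxm⟩
  have mem_right {x} (hx : x ∈ Ico (g (g m)) (g p)) (hmx : m ≤ x) : x ∈ Icc m b :=
    ⟨hmx, hx.2.le.trans hp.1.2.1.2⟩
  have reverse {x y} (hx : x ∈ Ico (g (g m)) (g p)) (hy : y ∈ Ico (g (g m)) (g p))
      (hxy : g x < g y) : g (g y) < g (g x) :=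
    hg.strictAntiOn_upper hp.1 (hmaps hx) (hmaps hy) hxy
  have hgg₁ : g (g x₁) = x₁ := h.map_fst
  have hgg₂ : g (g x₂) = x₁ := h.map_snd
  have hgg₃ : g (g x₃) = x₂ := h.map_thd
  rcases h.between with ⟨h₁₃, h₃₂⟩ | ⟨h₂₃, h₃₁⟩
  · rcases le_total x₃ m with hx₃m | hmx₃
    · have := reverse h₁ h₃ (hg.strictMonoOn (mem_left h₁ hx₁m.le) (mem_left h₃ hx₃m) h₁₃)
      order
    · have := reverse h₂ h₃
        (hg.strictAntiOn (mem_right h₃ hmx₃) (mem_right h₂ (hmx₃.trans h₃₂.le)) h₃₂)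
      order
  · have h₂₁ : x₂ < x₁ := h₂₃.trans h₃₁
    have := reverse h₂ h₁
      (hg.strictMonoOn (mem_left h₂ (h₂₁.trans hx₁m).le) (mem_left h₁ hx₁m.le) h₂₁)
    order

theorem not_turbulentTriple_upper (hsep : g (g m) < g p → p < g (g (g m)))
    (h : IsTurbulentTriple (g ∘ g) x₁ x₂ x₃) : x₂ ∉ Ioc p (g m) := by
  intro h₂
  have hmaps := hg.mapsTo_upper_lower hp.1
  have h₁ := h.fst_mem ((hg.mapsTo_lower_upper hp.1 hsep).comp hmaps) h₂
  have h₃ := h.thd_mem ordConnected_Ioc h₁ h₂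
  have hcomm : Function.Commute g (g ∘ g) := fun _ ↦ rfl
  have himage : IsTurbulentTriple (g ∘ g) (g x₁) (g x₂) (g x₃) :=
    h.image_of_strictAntiOn hcomm (hg.strictAntiOn_upper hp.1) h₁ h₂ h₃
  exact hg.not_turbulentTriple_lower hp hsep himage (hmaps h₂)

theorem map_map_peak_lt_and_le_of_turbulentOn (h : TurbulentOn (g ∘ g) (Icc a b)) :
    g (g m) < g p ∧ g (g (g m)) ≤ p := by
  obtain ⟨x₁, h₁, x₂, h₂, x₃, -, h⟩ := h
  by_contra! hsep
  have hcore : x₂ ∈ Icc (g (g m)) (g m) := (hg.turbulentTriple_mem_core h h₁ h₂).2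
  rcases lt_or_ge x₂ (g p) with hlt | hge
  · exact hg.not_turbulentTriple_lower hp hsep h ⟨hcore.1, hlt⟩
  · rcases le_or_gt x₂ p with hle | hgt
    · exact h.notMem_Icc_of_mem_twoCyclePts ordConnected_Icc hg.strictAntiOn hp.1 ⟨hge, hle⟩
    · exact hg.not_turbulentTriple_upper hp hsep h ⟨hgt, hcore.2⟩

end MaximalTwoCycle

end UnimodalAboveDiagonal

end LinearOrder

section LinearContinuum

variable {α : Type*} [ConditionallyCompleteLinearOrder α] [TopologicalSpace α] [OrderTopology α]
  [DenselyOrdered α] {f g : α → α} {a b c m p u : α}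

theorem turbulentOn_Icc_of_map_le (hf : ContinuousOn f (Icc p c)) (hpc : p < c) (hu : u ∈ Icc p c)
    (hfp : f p = p) (hfu : c ≤ f u) (hfc : f c ≤ p) :
    TurbulentOn f (Icc p c) := by
  obtain ⟨x₂, hx₂, hfx₂⟩ : p ∈ f '' Icc u c :=
    intermediate_value_Icc' hu.2 (hf.mono (Icc_subset_Icc_left hu.1)) ⟨hfc, hpc.le.trans hfu⟩
  obtain ⟨x₃, hx₃, hfx₃⟩ : x₂ ∈ f '' Icc p u :=
    intermediate_value_Icc hu.1 (hf.mono (Icc_subset_Icc_right hu.2))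
      ⟨hfp.trans_le (hu.1.trans hx₂.1), hx₂.2.trans hfu⟩
  have hpx₂ : p < x₂ := by
    refine (hu.1.trans hx₂.1).lt_of_ne ?_
    rintro rfl
    have : u = p := le_antisymm hx₂.1 hu.1
    subst this
    order
  refine ⟨p, ⟨le_rfl, hpc.le⟩, x₂, ⟨hpx₂.le, hx₂.2⟩, x₃, ⟨hx₃.1, hx₃.2.trans hu.2⟩,
    hfp, hfx₂, hfx₃, Or.inl ⟨?_, ?_⟩⟩
  · refine hx₃.1.lt_of_ne ?_
    rintro rfl
    order
  · refine (hx₃.2.trans hx₂.1).lt_of_ne ?_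
    rintro rfl
    order

theorem UnimodalAboveDiagonal.isGreatest_sSup_twoCyclePts (hg : UnimodalAboveDiagonal a m b g)
    (hcont : ContinuousOn g (Icc a b)) :
    IsGreatest (twoCyclePts g (Icc m b)) (sSup (twoCyclePts g (Icc m b))) := by
  have hcont' : ContinuousOn g (Icc m b) := hcont.mono (Icc_subset_Icc_left hg.peak_mem.1.le)
  have hgb : g b ≤ b := (hg.mapsTo ⟨(hg.peak_mem.1.trans hg.peak_mem.2).le, le_rfl⟩).2
  obtain ⟨z, hz, hfix⟩ := exists_mem_Icc_isFixedPt hcont' hg.peak_mem.2.le hg.lt_map_peak.le hgb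
  have hcompact : IsCompact (twoCyclePts g (Icc m b)) :=
    isCompact_Icc.of_isClosed_subset (isClosed_twoCyclePts isClosed_Icc hcont') fun _ hx ↦ hx.1
  exact hcompact.isGreatest_sSup ⟨z, mem_twoCyclePts_of_isFixedPt hz hfix⟩

theorem UnimodalAboveDiagonal.turbulentOn_comp_self (hg : UnimodalAboveDiagonal a m b g)
    (hcont : ContinuousOn g (Icc a b)) (hp : p ∈ twoCyclePts g (Icc m b))
    (hlt : g (g m) < m) (hle : g (g (g m)) ≤ p) : TurbulentOn (g ∘ g) (Icc a b) := by
  have hpc : p < g m := by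
    refine (hg.le_map_peak_of_mem_twoCyclePts hp).lt_of_ne ?_
    rintro rfl
    exact hlt.not_ge hp.2.1.1
  have hsub : Icc p (g m) ⊆ Icc a b :=
    Icc_subset_Icc (hg.peak_mem.1.le.trans hp.1.1) hg.map_peak_mem.2
  obtain ⟨u, hu, hgu⟩ : m ∈ g '' Icc p (g m) :=
    intermediate_value_Icc' hpc.le (hcont.mono hsub) ⟨hlt.le, hp.2.1.1⟩
  have hturb : TurbulentOn (g ∘ g) (Icc p (g m)) :=
    turbulentOn_Icc_of_map_le ((hcont.comp hcont hg.mapsTo).mono hsub) hpc hu hp.2.2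
      (congrArg g hgu).ge hle
  exact hturb.mono hsub

theorem second_iterate_turbulent_iff_general (hg : UnimodalAboveDiagonal a m b g)
    (hcont : ContinuousOn g (Icc a b)) :
    TurbulentOn (g ∘ g) (Icc a b) ↔
      g (g m) < m ∧ g (g (g m)) ≤ sSup (twoCyclePts g (Icc m b)) := by
  have hp := hg.isGreatest_sSup_twoCyclePts hcont
  constructor
  · intro h
    obtain ⟨hlt, hle⟩ := hg.map_map_peak_lt_and_le_of_turbulentOn hp h
    exact ⟨hg.map_map_peak_lt_peak hp.1 hlt hle, hle⟩
  · rintro ⟨hlt, hle⟩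
    exact hg.turbulentOn_comp_self hcont hp.1 hlt hle

end LinearContinuum

theorem turbulent_iff_turbulentOn {a b : ℝ} {h : ℝ → ℝ} :
    Turbulent a b h ↔ TurbulentOn h (Icc a b) := by
  constructor
  · rintro ⟨x₁, h₁, x₂, h₂, x₃, h₃, hx₂, hx₁, hx₃, hx⟩
    exact ⟨x₁, h₁, x₂, h₂, x₃, h₃, hx₁, hx₂, hx₃, hx⟩
  · rintro ⟨x₁, h₁, x₂, h₂, x₃, h₃, hx₁, hx₂, hx₃, hx⟩
    exact ⟨x₁, h₁, x₂, h₂, x₃, h₃, hx₂, hx₁, hx₃, hx⟩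

/-- Deng–Khan–Mitra: for a unimodal map `g` of `[a,b]` as below, the second iterate
`g²` is turbulent iff `g²(m) < m` and `g³(m) ≤ sup Π`. -/
theorem second_iterate_turbulent_iff
    (a b m : ℝ) (g : ℝ → ℝ)
    (hab : a < b)
    (hcont : ContinuousOn g (Set.Icc a b))
    (hmaps : Set.MapsTo g (Set.Icc a b) (Set.Icc a b))
    (hm : m ∈ Set.Ioo a b)
    (hmono : StrictMonoOn g (Set.Icc a m))
    (hanti : StrictAntiOn g (Set.Icc m b))
    (hga : g a ≥ a)
    (hgb : g b < b)
    (habove : ∀ x ∈ Set.Ioc a m, g x > x) :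
    Turbulent a b (g ∘ g) ↔
      g (g m) < m ∧
        g (g (g m)) ≤
          sSup {x | x ∈ Set.Icc m b ∧ g x ∈ Set.Icc m b ∧ g (g x) = x} := by
  exact turbulent_iff_turbulentOn.trans
    (second_iterate_turbulent_iff_general ⟨hmaps, hm, hmono, hanti, habove⟩ hcont)
end

section
/- Let β > 0 and suppose ((β+1)/β)^β < α ≤ (β+1)·((β+1)/β)^β. Then the map f(k) = α k (1−k)^β, with m = 1/(1+β), satisfies: f maps [0,1] into [0,1]; f is strictly increasing on [0,m] and strictly decreasing on [m,1]; f(0) ≥ 0; f(1) < 1; and f(k) > k for all k ∈ (0,m]. -/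
/-!
The derivative of `k ↦ α k (1 - k)^β` has the sign of `1 - (1 + β) k`, so the map is unimodal with
peak at `m = 1 / (1 + β)`. Since `(1 - m)^β` is the reciprocal of `c = ((β + 1) / β)^β`, the peak
value is `α / ((β + 1) c)`, and the upper bound on `α` says exactly that it is at most `1`. On
`(0, m]` the ratio `α (1 - k)^β` of the map to the identity is smallest at `m`, where it equals
`α / c`, so the lower bound on `α` makes it exceed `1`.
-/

/-- The map `k ↦ α k (1 - k)^β` on all of `ℝ`; only its restriction to `k ≤ 1` is meaningful, since
`Real.rpow` of a negative base follows a convention. -/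
noncomputable def pollutionMap (α β k : ℝ) : ℝ := α * k * (1 - k) ^ β

/-- The point `m = 1 / (1 + β)` where `pollutionMap α β` attains its maximum. -/
noncomputable def turningPoint (β : ℝ) : ℝ := 1 / (1 + β)

section PollutionMap

variable {α β k : ℝ}

theorem lt_turningPoint_iff (hβ : -1 < β) : k < turningPoint β ↔ (1 + β) * k < 1 :=
  lt_div_iff₀' (by linarith)

theorem turningPoint_lt_iff (hβ : -1 < β) : turningPoint β < k ↔ 1 < (1 + β) * k :=
  div_lt_iff₀' (by linarith)

theorem turningPoint_le_one (hβ : 0 ≤ β) : turningPoint β ≤ 1 :=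
  div_le_one_of_le₀ (by linarith) (by linarith)

theorem one_sub_turningPoint (hβ : 0 < β) : 1 - turningPoint β = ((β + 1) / β)⁻¹ := by
  unfold turningPoint
  field_simp
  ring

theorem one_sub_turningPoint_rpow (hβ : 0 < β) :
    (1 - turningPoint β) ^ β = (((β + 1) / β) ^ β)⁻¹ := by
  rw [one_sub_turningPoint hβ, Real.inv_rpow (by positivity)]

theorem pollutionMap_turningPoint (hβ : 0 < β) :
    pollutionMap α β (turningPoint β) = α / ((β + 1) * ((β + 1) / β) ^ β) := by
  rw [pollutionMap, one_sub_turningPoint_rpow hβ, turningPoint, add_comm 1 β, mul_one_div,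
    ← div_eq_mul_inv, div_div]

theorem continuous_pollutionMap (hβ : 0 ≤ β) : Continuous (pollutionMap α β) :=
  (continuous_const.mul continuous_id).mul
    ((continuous_const.sub continuous_id).rpow_const fun _ ↦ Or.inr hβ)

theorem hasDerivAt_pollutionMap (hk : k < 1) :
    HasDerivAt (pollutionMap α β) (α * (1 - k) ^ (β - 1) * (1 - (1 + β) * k)) k := by
  have hk₀ : 1 - k ≠ 0 := (sub_pos.2 hk).ne'
  have hlinear : HasDerivAt (fun x ↦ α * x) (α * 1) k := (hasDerivAt_id k).const_mul α
  have hpow : HasDerivAt (fun x ↦ (1 - x) ^ β) (-1 * β * (1 - k) ^ (β - 1)) k :=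
    ((hasDerivAt_id k).const_sub 1).rpow_const (Or.inl hk₀)
  refine (hlinear.mul hpow).congr_deriv ?_
  have hsplit : (1 - k) ^ β = (1 - k) ^ (β - 1) * (1 - k) := by
    rw [← Real.rpow_add_one hk₀, sub_add_cancel]
  rw [hsplit]
  ring

theorem strictMonoOn_pollutionMap (hα : 0 < α) (hβ : 0 ≤ β) :
    StrictMonoOn (pollutionMap α β) (Set.Iic (turningPoint β)) := by
  refine strictMonoOn_of_deriv_pos (convex_Iic _) (continuous_pollutionMap hβ).continuousOn ?_
  intro k hk
  rw [interior_Iic, Set.mem_Iio] at hk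
  have hk₁ : k < 1 := hk.trans_le (turningPoint_le_one hβ)
  have hsign : 0 < 1 - (1 + β) * k := sub_pos.2 ((lt_turningPoint_iff (by linarith)).1 hk)
  have hpow : 0 < (1 - k) ^ (β - 1) := Real.rpow_pos_of_pos (sub_pos.2 hk₁) _
  rw [(hasDerivAt_pollutionMap hk₁).deriv]
  exact mul_pos (mul_pos hα hpow) hsign

theorem strictAntiOn_pollutionMap (hα : 0 < α) (hβ : 0 ≤ β) :
    StrictAntiOn (pollutionMap α β) (Set.Icc (turningPoint β) 1) := by
  refine strictAntiOn_of_deriv_neg (convex_Icc _ _) (continuous_pollutionMap hβ).continuousOn ?_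
  intro k hk
  rw [interior_Icc] at hk
  have hsign : 1 - (1 + β) * k < 0 := sub_neg.2 ((turningPoint_lt_iff (by linarith)).1 hk.1)
  have hpow : 0 < (1 - k) ^ (β - 1) := Real.rpow_pos_of_pos (sub_pos.2 hk.2) _
  rw [(hasDerivAt_pollutionMap hk.2).deriv]
  exact mul_neg_of_pos_of_neg (mul_pos hα hpow) hsign

theorem pollutionMap_le_pollutionMap_turningPoint (hα : 0 < α) (hβ : 0 ≤ β) (hk : k ≤ 1) :
    pollutionMap α β k ≤ pollutionMap α β (turningPoint β) := by
  rcases le_total k (turningPoint β) with hle | hge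
  · exact (strictMonoOn_pollutionMap hα hβ).monotoneOn hle Set.self_mem_Iic hle
  · exact (strictAntiOn_pollutionMap hα hβ).antitoneOn
      (Set.left_mem_Icc.2 (turningPoint_le_one hβ)) ⟨hge, hk⟩ hge

theorem pollutionMap_nonneg (hα : 0 ≤ α) (hk : k ∈ Set.Icc 0 1) : 0 ≤ pollutionMap α β k :=
  mul_nonneg (mul_nonneg hα hk.1) (Real.rpow_nonneg (sub_nonneg.2 hk.2) _)

theorem mapsTo_pollutionMap_Icc (hα : 0 < α) (hβ : 0 < β)
    (hα_le : α ≤ (β + 1) * ((β + 1) / β) ^ β) :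
    Set.MapsTo (pollutionMap α β) (Set.Icc 0 1) (Set.Icc 0 1) := by
  refine fun k hk ↦ ⟨pollutionMap_nonneg hα.le hk, ?_⟩
  calc pollutionMap α β k ≤ pollutionMap α β (turningPoint β) :=
        pollutionMap_le_pollutionMap_turningPoint hα hβ.le hk.2
    _ = α / ((β + 1) * ((β + 1) / β) ^ β) := pollutionMap_turningPoint hβ
    _ ≤ 1 := div_le_one_of_le₀ hα_le (by positivity)

theorem pollutionMap_zero : pollutionMap α β 0 = 0 := by
  simp [pollutionMap]

theorem pollutionMap_one (hβ : β ≠ 0) : pollutionMap α β 1 = 0 := by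
  simp [pollutionMap, Real.zero_rpow hβ]

theorem lt_pollutionMap (hβ : 0 < β) (hα : ((β + 1) / β) ^ β < α)
    (hk : k ∈ Set.Ioc 0 (turningPoint β)) : k < pollutionMap α β k := by
  have hc : 0 < ((β + 1) / β) ^ β := by positivity
  have hα₀ : 0 < α := hc.trans hα
  have hm₁ : 0 ≤ 1 - turningPoint β := sub_nonneg.2 (turningPoint_le_one hβ.le)
  have hratio : 1 < α * (1 - k) ^ β :=
    calc 1 < α / ((β + 1) / β) ^ β := (one_lt_div hc).2 hα
      _ = α * (1 - turningPoint β) ^ β := by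
        rw [one_sub_turningPoint_rpow hβ, div_eq_mul_inv]
      _ ≤ α * (1 - k) ^ β := by
        gcongr
        exact hk.2
  calc k < k * (α * (1 - k) ^ β) := lt_mul_of_one_lt_right hk.1 hratio
    _ = pollutionMap α β k := by rw [pollutionMap]; ring

end PollutionMap

/-- For `((β+1)/β)^β < α ≤ (β+1)·((β+1)/β)^β`, the map `f(k) = α k (1−k)^β`
belongs to the Deng–Khan–Mitra class `𝔊` on `[0,1]` with turning point
`m = 1/(1+β)`. -/
theorem pollution_map_in_class_G
    (α β : ℝ) (hβ : 0 < β)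
    (hα₁ : ((β + 1) / β) ^ β < α)
    (hα₂ : α ≤ (β + 1) * ((β + 1) / β) ^ β)
    (f : ℝ → ℝ) (hf : ∀ k, f k = α * k * (1 - k) ^ β)
    (m : ℝ) (hm : m = 1 / (1 + β)) :
    Set.MapsTo f (Set.Icc 0 1) (Set.Icc 0 1) ∧
      StrictMonoOn f (Set.Icc 0 m) ∧
      StrictAntiOn f (Set.Icc m 1) ∧
      f 0 ≥ 0 ∧ f 1 < 1 ∧
      ∀ k ∈ Set.Ioc 0 m, f k > k := by
  obtain rfl : f = pollutionMap α β := funext hf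
  obtain rfl : m = turningPoint β := hm
  have hα : 0 < α := lt_trans (by positivity) hα₁
  refine ⟨mapsTo_pollutionMap_Icc hα hβ hα₂,
    (strictMonoOn_pollutionMap hα hβ.le).mono Set.Icc_subset_Iic_self,
    strictAntiOn_pollutionMap hα hβ.le,
    pollutionMap_zero.ge, ?_, fun k hk ↦ lt_pollutionMap hβ hα₁ hk⟩
  rw [pollutionMap_one hβ.ne']
  exact one_pos
end

section
/- Let α > 0 and β > 0, and set m = 1/(1+β). If f(m) > m, then f(k) > k for every k ∈ (0,m]. -/
/-!
The growth factor `f(k) / k = α (1 - k) ^ β` is nonincreasing in `k`, so it exceeds `1` on all of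
`(0, m]` as soon as it exceeds `1` at `m`.
-/

theorem lt_mul_of_antitoneOn_Ioc {R : Type*} [MulZeroOneClass R] [Preorder R]
    [PosMulStrictMono R] [PosMulReflectLT R] {g : R → R} {m : R}
    (hg : AntitoneOn g (Set.Ioc 0 m)) (hgm : m < m * g m) {k : R} (hk : k ∈ Set.Ioc 0 m) :
    k < k * g k := by
  have hm : 0 < m := hk.1.trans_le hk.2
  have one_lt_gm : 1 < g m := (lt_mul_iff_one_lt_right hm).1 hgm
  have gm_le_gk : g m ≤ g k := hg hk (Set.right_mem_Ioc.2 hm) hk.2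
  exact (lt_mul_iff_one_lt_right hk.1).2 (one_lt_gm.trans_le gm_le_gk)

theorem antitoneOn_sub_rpow (a : ℝ) {β : ℝ} (hβ : 0 ≤ β) :
    AntitoneOn (fun x : ℝ ↦ (a - x) ^ β) (Set.Iic a) :=
  fun _ _ _ hy hxy ↦ Real.rpow_le_rpow (sub_nonneg.2 hy) (sub_le_sub_left hxy a) hβ

theorem pollution_map_above_diagonal_general {α β m : ℝ} (hβ : 0 ≤ β) (hm : m ≤ 1) {f : ℝ → ℝ}
    (hf : ∀ k ∈ Set.Icc 0 1, f k = α * k * (1 - k) ^ β) (hfm : m < f m) :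
    ∀ k ∈ Set.Ioc 0 m, k < f k := by
  intro k hk
  have hm0 : 0 < m := hk.1.trans_le hk.2
  have f_eq : ∀ x ∈ Set.Ioc 0 m, f x = x * (α * (1 - x) ^ β) := fun x hx ↦ by
    rw [hf x ⟨hx.1.le, hx.2.trans hm⟩, mul_comm α, mul_assoc]
  rw [f_eq m (Set.right_mem_Ioc.2 hm0)] at hfm
  have hα : 0 ≤ α := by
    have factor_pos : 0 < α * (1 - m) ^ β := pos_of_mul_pos_right (hm0.trans hfm) hm0.le
    exact (pos_of_mul_pos_left factor_pos (Real.rpow_nonneg (sub_nonneg.2 hm) β)).le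
  have factor_anti : AntitoneOn (fun x ↦ α * (1 - x) ^ β) (Set.Ioc 0 m) :=
    (monotone_mul_left_of_nonneg hα).comp_antitoneOn <|
      (antitoneOn_sub_rpow 1 hβ).mono fun _ hx ↦ hx.2.trans hm
  rw [f_eq k hk]
  exact lt_mul_of_antitoneOn_Ioc factor_anti hfm hk

/-- If `f(m) > m` then `f(k) > k` for all `k ∈ (0, m]`, where `m = 1/(1+β)`. -/
theorem pollution_map_above_diagonal
    (α β : ℝ) (hα : 0 < α) (hβ : 0 < β)
    (f : ℝ → ℝ) (hf : ∀ k, f k = α * k * (1 - k) ^ β)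
    (m : ℝ) (hm : m = 1 / (1 + β))
    (hfm : f m > m) :
    ∀ k ∈ Set.Ioc 0 m, f k > k := by
  have hm1 : m ≤ 1 := hm ▸ div_le_self zero_le_one (le_add_of_nonneg_right hβ.le)
  exact pollution_map_above_diagonal_general hβ.le hm1 (fun k _ ↦ hf k) hfm
end

section
/- Let β = 1 and 1 + √5 < α ≤ 4, and let f(k) = α k (1−k). Then the set Π = {x ∈ [1/2, 1] : f(x) ∈ [1/2, 1] and f(f(x)) = x} equals the singleton {(α−1)/α}. -/
/-!
The sum and the product of the two points `x ≠ y` of a 2-cycle of `k ↦ a k (1 - k)` are both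
determined by `a`: the former is `(a + 1) / a` and the latter `(a + 1) / a ^ 2`. Hence
`a ^ 2 (2 x - 1) (2 y - 1) = 4 + 2 a - a ^ 2`, which is negative as soon as `a > 1 + √5`: the cycle
then straddles the critical point `1 / 2`, and only fixed points can stay in `[1 / 2, 1]`.
-/

/-- The logistic map `x ↦ a x (1 - x)` with parameter `a`, as a self-map of the whole ring rather
than of the interval `[0, 1]`. -/
def logistic {R : Type*} [CommRing R] (a x : R) : R := a * x * (1 - x)

namespace logistic

open Function

section TwoCycle

variable {R : Type*} [CommRing R] [NoZeroDivisors R] {a x y : R}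

theorem mul_add_eq_of_two_cycle (hxy : logistic a x = y) (hyx : logistic a y = x) (hne : x ≠ y) :
    a * (x + y) = a + 1 := by
  unfold logistic at hxy hyx
  have hfactor : (x - y) * (a * (x + y) - (a + 1)) = 0 := by linear_combination hyx - hxy
  exact sub_eq_zero.1 ((mul_eq_zero.1 hfactor).resolve_left (sub_ne_zero.2 hne))

theorem sq_mul_mul_eq_of_two_cycle (hxy : logistic a x = y) (hyx : logistic a y = x)
    (hne : x ≠ y) : a ^ 2 * (x * y) = a + 1 := by
  have hsum := mul_add_eq_of_two_cycle hxy hyx hne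
  unfold logistic at hxy
  linear_combination (1 + a * x) * hsum + a * hxy

theorem sq_mul_two_mul_sub_one_mul_eq_of_two_cycle (hxy : logistic a x = y)
    (hyx : logistic a y = x) (hne : x ≠ y) :
    a ^ 2 * ((2 * x - 1) * (2 * y - 1)) = 4 + 2 * a - a ^ 2 := by
  linear_combination 4 * sq_mul_mul_eq_of_two_cycle hxy hyx hne -
    2 * a * mul_add_eq_of_two_cycle hxy hyx hne

end TwoCycle

theorem isFixedPt_of_one_le_two_mul {R : Type*} [CommRing R] [LinearOrder R]
    [IsStrictOrderedRing R] {a x : R} (ha : 4 + 2 * a < a ^ 2)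
    (hx : 1 ≤ 2 * x) (hfx : 1 ≤ 2 * logistic a x) (hffx : logistic a (logistic a x) = x) :
    IsFixedPt (logistic a) x := by
  by_contra hne
  have hcycle := sq_mul_two_mul_sub_one_mul_eq_of_two_cycle rfl hffx (Ne.symm hne)
  have hnonneg : 0 ≤ a ^ 2 * ((2 * x - 1) * (2 * logistic a x - 1)) :=
    mul_nonneg (sq_nonneg a) (mul_nonneg (sub_nonneg.2 hx) (sub_nonneg.2 hfx))
  linarith

theorem isFixedPt_iff {K : Type*} [Field K] {a x : K} (ha : a ≠ 0) :
    IsFixedPt (logistic a) x ↔ x = 0 ∨ x = (a - 1) / a := by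
  have hfactor : logistic a x - x = -(x * (x * a - (a - 1))) := by unfold logistic; ring
  rw [IsFixedPt, ← sub_eq_zero, hfactor, neg_eq_zero, mul_eq_zero, sub_eq_zero, eq_div_iff ha]

end logistic

theorem sub_one_div_self_mem_Icc {K : Type*} [Field K] [LinearOrder K] [IsStrictOrderedRing K]
    {a : K} (ha : 2 ≤ a) : (a - 1) / a ∈ Set.Icc (1 / 2 : K) 1 := by
  have ha₀ : 0 < a := by linarith
  constructor
  · rw [le_div_iff₀ ha₀]
    linarith
  · rw [div_le_one ha₀]
    linarith

theorem logistic_Pi_singleton_general {K : Type*} [Field K] [LinearOrder K]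
    [IsStrictOrderedRing K] {a : K} (ha₀ : 0 < a) (ha : 4 + 2 * a < a ^ 2) :
    {x | x ∈ Set.Icc (1 / 2 : K) 1 ∧ logistic a x ∈ Set.Icc (1 / 2 : K) 1 ∧
      logistic a (logistic a x) = x} = {(a - 1) / a} := by
  have hfix : logistic a ((a - 1) / a) = (a - 1) / a :=
    (logistic.isFixedPt_iff ha₀.ne').2 (.inr rfl)
  have hmem : (a - 1) / a ∈ Set.Icc (1 / 2 : K) 1 := sub_one_div_self_mem_Icc (by nlinarith)
  refine Set.eq_singleton_iff_unique_mem.2 ⟨⟨hmem, by rwa [hfix], by rw [hfix, hfix]⟩, ?_⟩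
  rintro x ⟨⟨hx, -⟩, ⟨hfx, -⟩, hffx⟩
  have hx_fixed : Function.IsFixedPt (logistic a) x :=
    logistic.isFixedPt_of_one_le_two_mul ha (by linarith) (by linarith) hffx
  exact ((logistic.isFixedPt_iff ha₀.ne').1 hx_fixed).resolve_left (by linarith)

/-- For the logistic map `f(k) = α k (1−k)` with `1 + √5 < α ≤ 4`, the set
`Π = {x ∈ [1/2,1] : f(x) ∈ [1/2,1], f(f(x)) = x}` is the singleton
`{(α−1)/α}`. -/
theorem logistic_Pi_singleton
    (α : ℝ) (hα₁ : 1 + Real.sqrt 5 < α) (hα₂ : α ≤ 4)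
    (f : ℝ → ℝ) (hf : ∀ k, f k = α * k * (1 - k)) :
    {x | x ∈ Set.Icc (1 / 2 : ℝ) 1 ∧ f x ∈ Set.Icc (1 / 2 : ℝ) 1 ∧ f (f x) = x} =
      {(α - 1) / α} := by
  obtain rfl : f = logistic α := funext hf
  have hα₀ : 0 < α - 1 := by linarith [Real.sqrt_nonneg 5]
  have hα : 5 < (α - 1) ^ 2 := (Real.sqrt_lt' hα₀).1 (by linarith)
  exact logistic_Pi_singleton_general (by linarith) (by linarith)
end

section
/- Let β = 1 and 2 < α ≤ 4, and let f(k) = α k (1−k). Then f has a periodic point of odd minimal period at least 3 if and only if α > 1 + √5 and f(f(f(1/2))) < (α−1)/α. -/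
/-!
Let `c` be the turning point of a unimodal map `f` and `z ≥ c` a fixed point. If `c ≤ f² c` or
`z ≤ f³ c`, then `f` exchanges an interval `[a, z]` with `[z, f c]`, so an orbit of odd period
meeting `[z, f c]` lies in both intervals and is reduced to `z`; for the logistic map, the largest
point of a periodic orbit meeting `[0, ∞)` other than `{0}` does lie in `[z, f c]`. Otherwise, when
`f²` moves every point of `[c, z)` to the left, some point of `[c, z)` is carried by an even iterate
to `c` and three steps later below itself, whereas the other preimage of `z` is moved to the right
by every iterate: in between there is a fixed point of an iterate `f^[2 * k + 3]`. For the logistic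
map with `α > 2`, the condition `α > 1 + √5` says exactly that `f² c < c`, and it makes `f²` move
`[c, z)` to the left.
-/

open Function Set

section

variable {X : Type*}

theorem mapsTo_iterate_of_odd {f : X → X} {s t : Set X} (hst : MapsTo f s t) (hts : MapsTo f t s)
    {n : ℕ} (hn : Odd n) : MapsTo f^[n] s t := by
  obtain ⟨k, rfl⟩ := hn
  rw [← Nat.succ_eq_add_one, iterate_succ', iterate_mul]
  exact hst.comp ((hts.comp hst).iterate k)

theorem exists_forall_iterate_le_of_mem_periodicPts [LinearOrder X] {f : X → X} {x : X}
    (hx : x ∈ periodicPts f) : ∃ j, ∀ i, f^[i] x ≤ f^[j] x := by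
  have hpos : 0 < minimalPeriod f x := minimalPeriod_pos_of_mem_periodicPts hx
  obtain ⟨j, -, hj⟩ := Finset.exists_max_image (Finset.range (minimalPeriod f x)) (f^[·] x)
    (Finset.nonempty_range_iff.2 hpos.ne')
  refine ⟨j, fun i => ?_⟩
  rw [← iterate_mod_minimalPeriod_eq]
  exact hj _ (Finset.mem_range.2 (Nat.mod_lt _ hpos))

theorem exists_iterate_lt_of_forall_apply_lt_s14 [ConditionallyCompleteLinearOrder X]
    [TopologicalSpace X] [OrderTopology X] {g : X → X} (hg : Continuous g) {a b : X}
    (hlt : ∀ u ∈ Icc a b, g u < u) : ∃ k, g^[k] b < a := by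
  by_contra! hge
  have hle (k : ℕ) : g^[k] b ≤ b := by
    induction k with
    | zero => exact le_rfl
    | succ k ih =>
      rw [iterate_succ_apply']
      exact (hlt _ ⟨hge k, ih⟩).le.trans ih
  have hanti : Antitone fun k => g^[k] b := antitone_nat_of_succ_le fun k => by
    rw [iterate_succ_apply']
    exact (hlt _ ⟨hge k, hle k⟩).le
  have hlim := tendsto_atTop_ciInf hanti ⟨a, forall_mem_range.2 hge⟩
  have hmem : ⨅ k, g^[k] b ∈ Icc a b :=
    isClosed_Icc.mem_of_tendsto hlim (.of_forall fun k => ⟨hge k, hle k⟩)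
  exact (hlt _ hmem).ne (isFixedPt_of_tendsto_iterate hlim hg.continuousAt)

theorem exists_iterate_two_mul_add_three_lt [ConditionallyCompleteLinearOrder X]
    [TopologicalSpace X] [OrderTopology X] [DenselyOrdered X] {f : X → X} (hf : Continuous f)
    {c z : X} (hz : IsFixedPt f z) (hcz : c < z) (h₃ : f (f (f c)) < z)
    (h₂ : ∀ u ∈ Ico c z, f (f u) < u) : ∃ k, ∃ x ∈ Ico c z, f^[2 * k + 3] x < x := by
  obtain ⟨w, hw, hwz⟩ := exists_between (max_lt h₃ hcz)
  obtain ⟨h₃w, hcw⟩ := max_lt_iff.1 hw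
  obtain ⟨k, hk⟩ : ∃ k, f^[2 * k] w < c := by
    simpa only [iterate_mul] using exists_iterate_lt_of_forall_apply_lt_s14 (hf.iterate 2)
      fun u hu => h₂ u ⟨hu.1, hu.2.trans_lt hwz⟩
  obtain ⟨x, hx, hxc⟩ : ∃ x ∈ Ico w z, f^[2 * k] x = c :=
    intermediate_value_Ico hwz.le (hf.iterate _).continuousOn
      ⟨hk.le, by rwa [(hz.iterate _).eq]⟩
  refine ⟨k, x, ⟨hcw.le.trans hx.1, hx.2⟩, ?_⟩
  rw [add_comm, iterate_add_apply, hxc]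
  exact h₃w.trans_le hx.1

end

/-- `f` is unimodal with turning point `c`: it increases, in the weak sense, up to `c` and decreases
from there on. -/
structure IsUnimodalAt {X : Type*} [Preorder X] (f : X → X) (c : X) : Prop where
  monotoneOn : MonotoneOn f (Iic c)
  antitoneOn : AntitoneOn f (Ici c)

namespace IsUnimodalAt

section LinearOrder

variable {X : Type*} [LinearOrder X] {f : X → X} {a b c u z : X}

theorem apply_le (hf : IsUnimodalAt f c) (u : X) : f u ≤ f c := by
  rcases le_total u c with huc | hcu
  · exact hf.monotoneOn huc self_mem_Iic huc
  · exact hf.antitoneOn self_mem_Ici hcu hcu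

theorem min_le_apply (hf : IsUnimodalAt f c) (hu : u ∈ Icc a b) : min (f a) (f b) ≤ f u := by
  rcases le_total u c with huc | hcu
  · exact min_le_of_left_le (hf.monotoneOn (hu.1.trans huc) huc hu.1)
  · exact min_le_of_right_le (hf.antitoneOn hcu (hcu.trans hu.2) hu.2)

theorem le_apply_of_isFixedPt (hf : IsUnimodalAt f c) (hz : IsFixedPt f z) (ha : z ≤ f a)
    (hu : u ∈ Icc a z) : z ≤ f u :=
  (le_min ha hz.ge).trans (hf.min_le_apply hu)

theorem mapsTo_Icc_left (hf : IsUnimodalAt f c) (hz : IsFixedPt f z) (ha : z ≤ f a) :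
    MapsTo f (Icc a z) (Icc z (f c)) :=
  fun u hu => ⟨hf.le_apply_of_isFixedPt hz ha hu, hf.apply_le u⟩

theorem mapsTo_Icc_right (hf : IsUnimodalAt f c) (hz : IsFixedPt f z) (hcz : c ≤ z)
    (ha : a ≤ f (f c)) : MapsTo f (Icc z (f c)) (Icc a z) := fun u hu => by
  have hcu : c ≤ u := hcz.trans hu.1
  refine ⟨ha.trans (hf.antitoneOn hcu (hcu.trans hu.2) hu.2), ?_⟩
  simpa only [hz.eq] using hf.antitoneOn hcz hcu hu.1

theorem eq_of_isPeriodicPt_of_odd (hf : IsUnimodalAt f c) (hz : IsFixedPt f z) (hcz : c ≤ z)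
    (h : c ≤ f (f c) ∨ z ≤ f (f (f c))) {n : ℕ} (hn : Odd n) (hu : IsPeriodicPt f n u)
    (hzu : z ≤ u) : u = z := by
  obtain ⟨a, ha, hza⟩ : ∃ a, a ≤ f (f c) ∧ z ≤ f a := by
    rcases h with h | h
    · exact ⟨c, h, hz.ge.trans (hf.apply_le z)⟩
    · exact ⟨f (f c), le_rfl, h⟩
  have hright : u ∈ Icc z (f c) := by
    obtain ⟨m, rfl⟩ := Nat.exists_eq_succ_of_ne_zero hn.pos.ne'
    refine ⟨hzu, ?_⟩
    rw [← hu.eq, iterate_succ_apply']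
    exact hf.apply_le _
  have hleft : f^[n] u ∈ Icc a z := mapsTo_iterate_of_odd (hf.mapsTo_Icc_right hz hcz ha)
    (hf.mapsTo_Icc_left hz hza) hn hright
  exact le_antisymm (hu.eq ▸ hleft.2) hzu

end LinearOrder

section Topology

variable {X : Type*} [ConditionallyCompleteLinearOrder X] [TopologicalSpace X] [OrderTopology X]
  [DenselyOrdered X] {f : X → X} {c p z : X}

theorem exists_odd_minimalPeriod (hf : IsUnimodalAt f c) (hcont : Continuous f)
    (hz : IsFixedPt f z) (hcz : c < z) (hpc : p ≤ c) (hp : f p = z) (h₃ : f (f (f c)) < z)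
    (h₂ : ∀ u ∈ Ico c z, f (f u) < u) :
    ∃ y ∈ Ico p z, Odd (minimalPeriod f y) ∧ 3 ≤ minimalPeriod f y := by
  obtain ⟨k, x, hx, hxlt⟩ := exists_iterate_two_mul_add_three_lt hcont hz hcz h₃ h₂
  have hpx : p ≤ x := hpc.trans hx.1
  have hplt : p ≤ f^[2 * k + 3] p := by
    rw [iterate_succ_apply, hp, (hz.iterate _).eq]
    exact hpc.trans hcz.le
  obtain ⟨y, hy, hper⟩ :=
    exists_mem_Icc_isFixedPt (hcont.iterate _).continuousOn hpx hplt hxlt.le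
  have hyz : y < z := hy.2.trans_lt hx.2
  have hodd : Odd (minimalPeriod f y) :=
    Odd.of_dvd_nat ⟨k + 1, by ring⟩ (IsPeriodicPt.minimalPeriod_dvd hper)
  have hne : minimalPeriod f y ≠ 1 := fun h =>
    (hyz.trans_le (hf.le_apply_of_isFixedPt hz hp.ge ⟨hy.1, hyz.le⟩)).ne'
      (minimalPeriod_eq_one_iff_isFixedPt.1 h)
  refine ⟨y, ⟨hy.1, hyz⟩, hodd, ?_⟩
  obtain ⟨m, hm⟩ := hodd
  lia

end Topology

end IsUnimodalAt

/-- The logistic map with parameter `α`, as a map of the whole real line. -/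
def logisticMap (α k : ℝ) : ℝ := α * k * (1 - k)

namespace logisticMap

variable {α u x : ℝ}

theorem continuous (α : ℝ) : Continuous (logisticMap α) := by
  unfold logisticMap
  fun_prop

theorem apply_zero (α : ℝ) : logisticMap α 0 = 0 := by
  simp [logisticMap]

theorem apply_one_sub (α k : ℝ) : logisticMap α (1 - k) = logisticMap α k := by
  simp only [logisticMap]
  ring

theorem isUnimodalAt (hα : 0 ≤ α) : IsUnimodalAt (logisticMap α) (1 / 2) := by
  have hsub (u v : ℝ) :
      logisticMap α v - logisticMap α u = α * ((v - u) * (1 - u - v)) := by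
    simp only [logisticMap]
    ring
  constructor <;> intro u hu v hv huv <;> rw [← sub_nonneg, hsub] <;>
    simp only [mem_Iic, mem_Ici] at hu hv
  · exact mul_nonneg hα (mul_nonneg (by linarith) (by linarith))
  · exact mul_nonneg hα (mul_nonneg_of_nonpos_of_nonpos (by linarith) (by linarith))

theorem isFixedPt (hα : α ≠ 0) : IsFixedPt (logisticMap α) ((α - 1) / α) := by
  simp only [IsFixedPt, logisticMap]
  field_simp
  ring

theorem le_of_apply_le_self (hα : 0 < α) (hu : 0 < u) (h : logisticMap α u ≤ u) :
    (α - 1) / α ≤ u := by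
  have hmul : u * (α * (1 - u)) ≤ u * 1 := by
    calc u * (α * (1 - u)) = logisticMap α u := by rw [logisticMap]; ring
      _ ≤ u * 1 := by rwa [mul_one]
  rw [div_le_iff₀ hα]
  linarith [le_of_mul_le_mul_left hmul hu]

theorem three_lt_of_one_add_sqrt_five_lt (hα : 1 + √5 < α) : 3 < α := by
  have h₅ : 2 < √5 := (Real.lt_sqrt (by norm_num)).2 (by norm_num)
  linarith

theorem one_add_sqrt_five_lt_iff (hα : 1 < α) : 1 + √5 < α ↔ 0 < α ^ 2 - 2 * α - 4 := by
  rw [← lt_sub_iff_add_lt', Real.sqrt_lt' (sub_pos.2 hα), ← sub_pos]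
  ring_nf

theorem apply_apply_half_lt_iff (hα : 2 < α) :
    logisticMap α (logisticMap α (1 / 2)) < 1 / 2 ↔ 1 + √5 < α := by
  have hsub : 1 / 2 - logisticMap α (logisticMap α (1 / 2)) =
      (α - 2) / 16 * (α ^ 2 - 2 * α - 4) := by
    simp only [logisticMap]
    ring
  rw [one_add_sqrt_five_lt_iff (by linarith), ← sub_pos, hsub,
    mul_pos_iff_of_pos_left (by linarith)]

theorem periodTwo_quadratic_neg (hα : 1 + √5 < α) {s : ℝ} (hs : s ∈ Icc (α / 2) (α - 1)) :
    s ^ 2 - (α + 1) * s + (α + 1) < 0 := by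
  have hα₃ := three_lt_of_one_add_sqrt_five_lt hα
  -- Compare with the value at `α - 1` or at `α / 2`: the quadratic takes those values again at `2`
  -- and at `α / 2 + 1` respectively.
  rcases le_total 2 s with h | h
  · calc s ^ 2 - (α + 1) * s + (α + 1) = (s - (α - 1)) * (s - 2) + (3 - α) := by ring
      _ ≤ 3 - α := add_le_of_nonpos_left
        (mul_nonpos_of_nonpos_of_nonneg (sub_nonpos.2 hs.2) (sub_nonneg.2 h))
      _ < 0 := sub_neg.2 hα₃
  · calc s ^ 2 - (α + 1) * s + (α + 1)
        = (s - α / 2) * (s - (α / 2 + 1)) + -(α ^ 2 - 2 * α - 4) / 4 := by ring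
      _ ≤ -(α ^ 2 - 2 * α - 4) / 4 := add_le_of_nonpos_left
        (mul_nonpos_of_nonneg_of_nonpos (sub_nonneg.2 hs.1) (by linarith))
      _ < 0 := by linarith [(one_add_sqrt_five_lt_iff (by linarith)).1 hα]

theorem apply_apply_lt_self (hα : 1 + √5 < α) (hu : u ∈ Ico (1 / 2) ((α - 1) / α)) :
    logisticMap α (logisticMap α u) < u := by
  have hα₀ : 0 < α := by linarith [Real.sqrt_nonneg 5]
  have hlt : α * u < α - 1 := (lt_div_iff₀' hα₀).1 hu.2
  have hge : α / 2 ≤ α * u := by linarith [mul_le_mul_of_nonneg_left hu.1 hα₀.le]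
  have hu₀ : 0 < u := one_half_pos.trans_le hu.1
  have hsub : u - logisticMap α (logisticMap α u) =
      u * ((α * u - (α - 1)) * ((α * u) ^ 2 - (α + 1) * (α * u) + (α + 1))) := by
    simp only [logisticMap]
    ring
  rw [← sub_pos, hsub]
  exact mul_pos hu₀ (mul_pos_of_neg_of_neg (sub_neg.2 hlt)
    (periodTwo_quadratic_neg hα ⟨hge, hlt.le⟩))

theorem half_lt_fixedPt (hα : 2 < α) : 1 / 2 < (α - 1) / α := by
  rw [lt_div_iff₀ (by linarith)]
  linarith

theorem minimalPeriod_eq_one_of_odd (hα : 2 < α)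
    (h : 1 / 2 ≤ logisticMap α (logisticMap α (1 / 2)) ∨
      (α - 1) / α ≤ logisticMap α (logisticMap α (logisticMap α (1 / 2))))
    (hx : 0 ≤ x) (hodd : Odd (minimalPeriod (logisticMap α) x)) :
    minimalPeriod (logisticMap α) x = 1 := by
  have hα₀ : 0 < α := by linarith
  have hxper : x ∈ periodicPts (logisticMap α) := minimalPeriod_pos_iff_mem_periodicPts.1 hodd.pos
  obtain ⟨j, hmax⟩ := exists_forall_iterate_le_of_mem_periodicPts hxper
  rw [← minimalPeriod_apply_iterate hxper j, minimalPeriod_eq_one_iff_isFixedPt]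
  have hle : logisticMap α ((logisticMap α)^[j] x) ≤ (logisticMap α)^[j] x := by
    simpa only [iterate_succ_apply'] using hmax (j + 1)
  rcases (hx.trans (hmax 0)).eq_or_lt with h₀ | hpos
  · rw [← h₀]
    exact apply_zero α
  · rw [(isUnimodalAt hα₀.le).eq_of_isPeriodicPt_of_odd (isFixedPt hα₀.ne')
      (half_lt_fixedPt hα).le h hodd ((isPeriodicPt_minimalPeriod _ x).apply_iterate j)
      (le_of_apply_le_self hα₀ hpos hle)]
    exact isFixedPt hα₀.ne'

theorem exists_odd_minimalPeriod (hα : 1 + √5 < α)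
    (h₃ : logisticMap α (logisticMap α (logisticMap α (1 / 2))) < (α - 1) / α) :
    ∃ x ∈ Icc (0 : ℝ) 1, Odd (minimalPeriod (logisticMap α) x) ∧
      3 ≤ minimalPeriod (logisticMap α) x := by
  have hα₂ : 2 < α := by linarith [three_lt_of_one_add_sqrt_five_lt hα]
  have hα₀ : 0 < α := by linarith
  have hz := isFixedPt hα₀.ne'
  have hhalf := half_lt_fixedPt hα₂
  have hle : (α - 1) / α ≤ 1 := (div_le_one hα₀).2 (by linarith)
  obtain ⟨y, hy, hodd⟩ := (isUnimodalAt hα₀.le).exists_odd_minimalPeriod (continuous α) hz hhalf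
    (p := 1 - (α - 1) / α) (by linarith) ((apply_one_sub α _).trans hz) h₃
    fun u hu => apply_apply_lt_self hα hu
  exact ⟨y, ⟨by linarith [hy.1], by linarith [hy.2]⟩, hodd⟩

end logisticMap

theorem logistic_odd_period_iff_general {α : ℝ} (hα : 2 < α) :
    (∃ x ∈ Icc (0 : ℝ) 1, Odd (minimalPeriod (logisticMap α) x) ∧
        3 ≤ minimalPeriod (logisticMap α) x) ↔
      1 + √5 < α ∧ logisticMap α (logisticMap α (logisticMap α (1 / 2))) < (α - 1) / α := by
  refine ⟨?_, fun h => logisticMap.exists_odd_minimalPeriod h.1 h.2⟩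
  rintro ⟨x, hx, hodd, hthree⟩
  by_contra hcon
  rw [← logisticMap.apply_apply_half_lt_iff hα, not_and_or, not_lt, not_lt] at hcon
  have hone := logisticMap.minimalPeriod_eq_one_of_odd hα hcon hx.1 hodd
  lia

/-- For the logistic map `f(k) = α k (1−k)` with `2 < α ≤ 4`, `f` has a periodic
point of odd minimal period at least 3 iff `α > 1 + √5` and
`f³(1/2) < (α−1)/α`. -/
theorem logistic_odd_period_iff
    (α : ℝ) (hα₁ : 2 < α) (hα₂ : α ≤ 4)
    (f : ℝ → ℝ) (hf : ∀ k, f k = α * k * (1 - k)) :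
    (∃ x ∈ Set.Icc (0 : ℝ) 1,
        Odd (Function.minimalPeriod f x) ∧ 3 ≤ Function.minimalPeriod f x) ↔
      α > 1 + Real.sqrt 5 ∧ f (f (f (1 / 2))) < (α - 1) / α := by
  obtain rfl : f = logisticMap α := funext hf
  exact logistic_odd_period_iff_general hα₁
end

section
/- Let β = 2 and 9/2 < α ≤ 27/4, and let f(k) = α k (1−k)². Then the set Π = {x ∈ [1/3, 1] : f(x) ∈ [1/3, 1] and f(f(x)) = x} equals the singleton {1 − 1/√α}. -/
/-!
If `x` and `y` form a 2-cycle of `f`, multiplying `f x = y` and `f y = x` gives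
`(α (1 - x) (1 - y))² = 1`, hence `α (1 - x) (1 - y) = 1` for `x, y ∈ (0, 1]`. Multiplying
`f x = y` by `1 - y` then yields `x (1 - x) = y (1 - y)`, so that `x = y` or `x + y = 1`.
In the second case `α x y = 1`, while `x y ≥ 2/9` for `x, y ≥ 1/3`, so `α ≤ 9/2`.
-/

open Function Set

/-- The map `f_α` of the cubic family `k ↦ α k (1 - k)²`, over an arbitrary commutative ring
because the algebra of its fixed points and 2-cycles does not depend on the order of `ℝ`. -/
def betaTwoMap {R : Type*} [CommRing R] (α k : R) : R :=
  α * k * (1 - k) ^ 2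

namespace betaTwoMap

section CommRing

variable {R : Type*} [CommRing R] {α x y : R}

theorem mul_one_sub_eq_of_map_eq (h : α * (1 - x) * (1 - y) = 1) (hxy : betaTwoMap α x = y) :
    x * (1 - x) = y * (1 - y) := by
  unfold betaTwoMap at hxy
  linear_combination (1 - y) * hxy - x * (1 - x) * h

variable [IsDomain R]

theorem isFixedPt_iff (hx : x ≠ 0) : IsFixedPt (betaTwoMap α) x ↔ α * (1 - x) ^ 2 = 1 := by
  rw [IsFixedPt, betaTwoMap, mul_right_comm, mul_eq_right₀ hx]

theorem sq_mul_one_sub_mul_one_sub_eq_one (hx : x ≠ 0) (hy : y ≠ 0)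
    (hxy : betaTwoMap α x = y) (hyx : betaTwoMap α y = x) :
    (α * (1 - x) * (1 - y)) ^ 2 = 1 := by
  refine mul_left_cancel₀ (mul_ne_zero hx hy) ?_
  calc x * y * (α * (1 - x) * (1 - y)) ^ 2
      = betaTwoMap α x * betaTwoMap α y := by unfold betaTwoMap; ring
    _ = x * y * 1 := by rw [hxy, hyx]; ring

theorem eq_or_add_eq_one (h : α * (1 - x) * (1 - y) = 1) (hxy : betaTwoMap α x = y) :
    x = y ∨ x + y = 1 := by
  have hprod : (x - y) * (x + y - 1) = 0 := by
    linear_combination -mul_one_sub_eq_of_map_eq h hxy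
  exact (mul_eq_zero.mp hprod).imp sub_eq_zero.mp sub_eq_zero.mp

end CommRing

theorem mul_one_sub_mul_one_sub_eq_one {R : Type*} [CommRing R] [LinearOrder R]
    [IsStrictOrderedRing R] {α x y : R} (hx : x ∈ Ioc 0 1) (hy : y ∈ Ioc 0 1)
    (hxy : betaTwoMap α x = y) (hyx : betaTwoMap α y = x) :
    α * (1 - x) * (1 - y) = 1 := by
  have hα : 0 ≤ α := by
    have hpos : 0 < α * x * (1 - x) ^ 2 := hy.1.trans_eq hxy.symm
    exact (pos_of_mul_pos_left (pos_of_mul_pos_left hpos (sq_nonneg _)) hx.1.le).le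
  have hnonneg : 0 ≤ α * (1 - x) * (1 - y) :=
    mul_nonneg (mul_nonneg hα (sub_nonneg.mpr hx.2)) (sub_nonneg.mpr hy.2)
  exact (pow_eq_one_iff_of_nonneg hnonneg two_ne_zero).mp
    (sq_mul_one_sub_mul_one_sub_eq_one hx.1.ne' hy.1.ne' hxy hyx)

section OrderedField

variable {K : Type*} [Field K] [LinearOrder K] [IsStrictOrderedRing K] {α x y : K}

theorem le_nine_halves_of_add_eq_one (hx : 1 / 3 ≤ x) (hy : 1 / 3 ≤ y) (hadd : x + y = 1)
    (h : α * (1 - x) * (1 - y) = 1) : α ≤ 9 / 2 := by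
  have hmul : 2 / 9 ≤ x * y := by
    linarith [mul_nonneg (sub_nonneg.mpr hx) (sub_nonneg.mpr hy)]
  have hone : α * (x * y) = 1 := by
    rw [← h, ← hadd]
    ring
  calc α = 1 / (x * y) := eq_one_div_of_mul_eq_one_left hone
    _ ≤ 1 / (2 / 9) := one_div_le_one_div_of_le (by norm_num) hmul
    _ = 9 / 2 := by norm_num

theorem isFixedPt_of_two_cycle (hα : 9 / 2 < α) (hx : x ∈ Icc (1 / 3) 1)
    (hy : betaTwoMap α x ∈ Icc (1 / 3) 1) (hxx : betaTwoMap α (betaTwoMap α x) = x) :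
    IsFixedPt (betaTwoMap α) x := by
  have hIoc : Icc (1 / 3 : K) 1 ⊆ Ioc 0 1 := Icc_subset_Ioc (by norm_num) le_rfl
  have h := mul_one_sub_mul_one_sub_eq_one (hIoc hx) (hIoc hy) rfl hxx
  rcases eq_or_add_eq_one h rfl with heq | hadd
  · exact heq.symm
  · exact absurd (le_nine_halves_of_add_eq_one hx.1 hy.1 hadd h) hα.not_ge

end OrderedField

theorem isFixedPt_iff_eq_one_sub_one_div_sqrt {α x : ℝ} (hα : 0 < α) (hx₀ : x ≠ 0)
    (hx₁ : x ≤ 1) : IsFixedPt (betaTwoMap α) x ↔ x = 1 - 1 / √α := by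
  have hnonneg : 0 ≤ √α * (1 - x) := mul_nonneg (Real.sqrt_nonneg α) (sub_nonneg.mpr hx₁)
  calc IsFixedPt (betaTwoMap α) x
      ↔ (√α * (1 - x)) ^ 2 = 1 := by rw [isFixedPt_iff hx₀, mul_pow, Real.sq_sqrt hα.le]
    _ ↔ √α * (1 - x) = 1 := pow_eq_one_iff_of_nonneg hnonneg two_ne_zero
    _ ↔ 1 - x = 1 / √α := by rw [eq_div_iff (Real.sqrt_pos.mpr hα).ne', mul_comm]
    _ ↔ x = 1 - 1 / √α := sub_eq_iff_eq_add.trans (by rw [eq_sub_iff_add_eq', eq_comm])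

end betaTwoMap

theorem one_sub_one_div_sqrt_mem_Icc {α : ℝ} (hα : 9 / 4 ≤ α) :
    1 - 1 / √α ∈ Icc (1 / 3 : ℝ) 1 := by
  have hsqrt : 3 / 2 ≤ √α := Real.le_sqrt_of_sq_le (by linarith)
  have hle : 1 / √α ≤ 1 / (3 / 2) := one_div_le_one_div_of_le (by norm_num) hsqrt
  have hnonneg : 0 ≤ 1 / √α := by positivity
  constructor <;> linarith

theorem beta_two_Pi_singleton_general (α : ℝ) (hα : 9 / 2 < α)
    (f : ℝ → ℝ) (hf : ∀ k, f k = α * k * (1 - k) ^ 2) :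
    {x | x ∈ Icc (1 / 3 : ℝ) 1 ∧ f x ∈ Icc (1 / 3 : ℝ) 1 ∧ f (f x) = x} = {1 - 1 / √α} := by
  obtain rfl : f = betaTwoMap α := funext hf
  have hfix_iff {x : ℝ} (hx : x ∈ Icc (1 / 3) 1) :
      IsFixedPt (betaTwoMap α) x ↔ x = 1 - 1 / √α :=
    betaTwoMap.isFixedPt_iff_eq_one_sub_one_div_sqrt (by linarith) (by linarith [hx.1]) hx.2
  refine Subset.antisymm ?_ (singleton_subset_iff.mpr ?_)
  · rintro x ⟨hx, hfx, hffx⟩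
    exact (hfix_iff hx).mp (betaTwoMap.isFixedPt_of_two_cycle hα hx hfx hffx)
  · have hmem := one_sub_one_div_sqrt_mem_Icc (α := α) (by linarith)
    have hfix : IsFixedPt (betaTwoMap α) (1 - 1 / √α) := (hfix_iff hmem).mpr rfl
    exact ⟨hmem, hfix.eq.symm ▸ hmem, (hfix.iterate 2).eq⟩

/-- For `f(k) = α k (1−k)²` with `9/2 < α ≤ 27/4`, the set
`Π = {x ∈ [1/3,1] : f(x) ∈ [1/3,1], f(f(x)) = x}` is the singleton
`{1 − 1/√α}`. -/
theorem beta_two_Pi_singleton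
    (α : ℝ) (hα₁ : 9 / 2 < α) (hα₂ : α ≤ 27 / 4)
    (f : ℝ → ℝ) (hf : ∀ k, f k = α * k * (1 - k) ^ 2) :
    {x | x ∈ Set.Icc (1 / 3 : ℝ) 1 ∧ f x ∈ Set.Icc (1 / 3 : ℝ) 1 ∧ f (f x) = x} =
      {1 - 1 / Real.sqrt α} :=
  beta_two_Pi_singleton_general α hα₁ f hf
end
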